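/- arXiv:2211.00965 — 6 statements merged into one kernel-verified Lean document; each statement's English description precedes it below -/
import Mathlib

section
/- Let X be a complex Hilbert space and let A : X → X be a bounded conjugate-linear map satisfying the symmetry ⟨Af, g⟩ = ⟨Ag, f⟩ for all f, g ∈ X (so that the linear operator A² := A∘A is bounded, self-adjoint and positive semi-definite). Assume v ∈ X is a cyclic vector for A², i.e. the closed linear span of {(A²)ⁿ v : n ≥ 0} is all of X. Then there exist (a) a conjugate-linear isometric involution J on X (J is conjugate-linear, ‖Jx‖ = ‖x‖ for all x, and J∘J = I) satisfying J((A²)ⁿ v) = (A²)ⁿ v for every n ≥ 0, and (b) a unitary operator W on X commuting with A², such that A = √(A²) ∘ W ∘ J, where √(A²) denotes the positive square root of A². (Spectral theorem for symmetric anti-linear operators: in the multiplication-operator model A acts as f(s) ↦ s·ψ(s)·conj(f(s)) for a unimodular function ψ.) -/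
open scoped ComplexConjugate InnerProductSpace

/-!
The vectors `(A²)ⁿ v` have real pairwise inner products, so conjugating coefficients in their
linear combinations preserves the norm and extends to a conjugation `J`, which commutes with `A²`.
The linear operator `T = A ∘ J` has adjoint `J ∘ A`, whence `T* T = T T* = A²`: it is normal with
`|T| = √(A²)`. A normal operator and its absolute value have the same kernel, which is the
orthogonal complement of the range of each, so the partial isometry of the polar decomposition of
`T` extends by the identity on this kernel to a unitary `W` with `W |T| = T`. As `|T|` commutes
with `T`, also `|T| W = T`.
-/

section UnitaryExtension

variable {𝕜 E F : Type*} [RCLike 𝕜] [AddCommGroup E] [Module 𝕜 E]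
  [NormedAddCommGroup F] [InnerProductSpace 𝕜 F]

theorem norm_add_eq_of_mem_orthogonal_range {S T : E →ₗ[𝕜] F} (horth : S.rangeᗮ = T.rangeᗮ)
    (hnorm : ∀ x, ‖S x‖ = ‖T x‖) (x : E) {y : F} (hy : y ∈ S.rangeᗮ) :
    ‖T x + y‖ = ‖S x + y‖ := by
  have hS : ⟪S x, y⟫_𝕜 = 0 := hy _ ⟨x, rfl⟩
  have hT : ⟪T x, y⟫_𝕜 = 0 := (horth ▸ hy : y ∈ T.rangeᗮ) _ ⟨x, rfl⟩
  rw [← mul_self_inj (norm_nonneg _) (norm_nonneg _),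
    norm_add_sq_eq_norm_sq_add_norm_sq_of_inner_eq_zero _ _ hT,
    norm_add_sq_eq_norm_sq_add_norm_sq_of_inner_eq_zero _ _ hS, hnorm]

variable [CompleteSpace F]

theorem denseRange_coprod_subtype_orthogonal_range (S : E →ₗ[𝕜] F) :
    DenseRange (S.coprod S.rangeᗮ.subtype) := by
  have hrange : (S.coprod S.rangeᗮ.subtype).range = S.range ⊔ S.rangeᗮ := by
    rw [LinearMap.range_coprod, Submodule.range_subtype]
  have hdense : Dense ((S.coprod S.rangeᗮ.subtype).range : Set F) := by
    rw [Submodule.dense_iff_topologicalClosure_eq_top, Submodule.topologicalClosure_eq_top_iff,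
      hrange, ← Submodule.inf_orthogonal, Submodule.inf_orthogonal_eq_bot]
  exact hdense

theorem exists_linearIsometryEquiv_apply_eq_of_norm_eq {S T : E →ₗ[𝕜] F}
    (horth : S.rangeᗮ = T.rangeᗮ) (hnorm : ∀ x, ‖S x‖ = ‖T x‖) :
    ∃ W : F ≃ₗᵢ[𝕜] F, (∀ x, W (S x) = T x) ∧ ∀ y ∈ S.rangeᗮ, W y = y := by
  have hS : DenseRange (S.coprod S.rangeᗮ.subtype) :=
    denseRange_coprod_subtype_orthogonal_range S
  have hT : DenseRange (T.coprod S.rangeᗮ.subtype) := by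
    rw [horth]
    exact denseRange_coprod_subtype_orthogonal_range T
  have hiso : ∀ p, ‖T.coprod S.rangeᗮ.subtype (LinearEquiv.refl 𝕜 (E × S.rangeᗮ) p)‖ =
      ‖S.coprod S.rangeᗮ.subtype p‖ := fun p =>
    norm_add_eq_of_mem_orthogonal_range horth hnorm p.1 p.2.2
  have hW := LinearEquiv.extendOfIsometry_eq _ _ _ hS hT hiso
  refine ⟨LinearEquiv.extendOfIsometry _ _ _ hS hT hiso, fun x => ?_, fun y hy => ?_⟩
  · simpa using hW (x, 0)
  · simpa using hW (0, ⟨y, hy⟩)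

end UnitaryExtension

section PolarDecomposition

variable {H : Type*} [NormedAddCommGroup H] [InnerProductSpace ℂ H] [CompleteSpace H]

theorem norm_cfcAbs_apply (T : H →L[ℂ] H) (x : H) : ‖CFC.abs T x‖ = ‖T x‖ := by
  have hstar : star (CFC.abs T) * CFC.abs T = star T * T := by
    rw [(CFC.abs_nonneg T).isSelfAdjoint.star_eq, CFC.abs_mul_abs]
  have hinner : ⟪CFC.abs T x, CFC.abs T x⟫_ℂ = ⟪T x, T x⟫_ℂ := by
    rw [← ContinuousLinearMap.adjoint_inner_right, ← ContinuousLinearMap.adjoint_inner_right T]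
    exact congrArg (fun S : H →L[ℂ] H => ⟪x, S x⟫_ℂ) hstar
  rw [@norm_eq_sqrt_re_inner ℂ, @norm_eq_sqrt_re_inner ℂ, hinner]

theorem exists_linearIsometryEquiv_cfcAbs_of_isStarNormal {T : H →L[ℂ] H} (hT : IsStarNormal T) :
    ∃ W : H ≃ₗᵢ[ℂ] H, (∀ x, W (CFC.abs T x) = T x) ∧ ∀ x, CFC.abs T (W x) = T x := by
  set R := CFC.abs T
  have hnorm : ∀ x, ‖R x‖ = ‖T x‖ := norm_cfcAbs_apply T
  have hker : R.ker = T.ker := by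
    ext x
    change R x = 0 ↔ T x = 0
    rw [← norm_eq_zero, hnorm, norm_eq_zero]
  have hRorth : R.rangeᗮ = R.ker :=
    ContinuousLinearMap.IsStarNormal.orthogonal_range (CFC.abs_nonneg T).isSelfAdjoint.isStarNormal
  have horth : R.rangeᗮ = T.rangeᗮ := by
    rw [hRorth, hker, ContinuousLinearMap.IsStarNormal.orthogonal_range hT]
  obtain ⟨W, hWR, hWker⟩ := exists_linearIsometryEquiv_apply_eq_of_norm_eq horth hnorm
  refine ⟨W, hWR, fun x => ?_⟩
  refine (denseRange_coprod_subtype_orthogonal_range (R : H →ₗ[ℂ] H)).induction_on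
    (p := fun x => R (W x) = T x) x (isClosed_eq (by fun_prop) (by fun_prop)) ?_
  rintro ⟨y, k, hk⟩
  have hRk : R k = 0 := hRorth.le hk
  have hTk : T k = 0 := hker.le hRk
  have hcomm : R (T y) = T (R y) := DFunLike.congr_fun (CFC.commute_abs_self T).eq y
  have hWRy : W (R y) = T y := hWR y
  change R (W (R y + k)) = T (R y + k)
  rw [map_add, map_add, map_add, hWRy, hWker k hk, hRk, hTk, hcomm]

end PolarDecomposition

section Conjugation

variable {𝕜 E F ι : Type*} [RCLike 𝕜] [NormedAddCommGroup E] [InnerProductSpace 𝕜 E]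
  [NormedAddCommGroup F] [InnerProductSpace 𝕜 F]

theorem inner_map_map_of_antilinear_isometry (J : E →ₗᵢ⋆[𝕜] F) (x y : E) :
    ⟪J x, J y⟫_𝕜 = ⟪y, x⟫_𝕜 := by
  have hsub : J x - (RCLike.I : 𝕜) • J y = J (x + (RCLike.I : 𝕜) • y) := by
    rw [map_add, J.map_smulₛₗ, RCLike.conj_I, neg_smul, sub_eq_add_neg]
  have hadd : J x + (RCLike.I : 𝕜) • J y = J (x - (RCLike.I : 𝕜) • y) := by
    rw [map_sub, J.map_smulₛₗ, RCLike.conj_I, neg_smul, sub_neg_eq_add]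
  rw [← inner_conj_symm y x, inner_eq_sum_norm_sq_div_four, inner_eq_sum_norm_sq_div_four x,
    hsub, hadd, ← map_add, ← map_sub]
  simp only [J.norm_map]
  simp only [map_div₀, map_add, map_sub, map_mul, map_pow, RCLike.conj_ofReal,
    RCLike.conj_I, map_ofNat]
  ring

variable (𝕜 ι) in
/-- Entrywise conjugation of the coefficients of a formal linear combination; the conjugation `J`
is its extension to the Hilbert space by continuity. -/
noncomputable def coeffConj : (ι →₀ 𝕜) ≃ₗ⋆[𝕜] (ι →₀ 𝕜) :=
  Finsupp.mapRange.linearEquiv (starLinearEquiv 𝕜)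

theorem coeffConj_single (i : ι) (c : 𝕜) :
    coeffConj 𝕜 ι (Finsupp.single i c) = Finsupp.single i (conj c) :=
  Finsupp.mapRange_single (hf := map_zero (starLinearEquiv 𝕜))

theorem inner_linearCombination_coeffConj {u : ι → E} (hu : ∀ i j, ⟪u i, u j⟫_𝕜 = ⟪u j, u i⟫_𝕜)
    (a b : ι →₀ 𝕜) :
    ⟪Finsupp.linearCombination 𝕜 u (coeffConj 𝕜 ι a),
      Finsupp.linearCombination 𝕜 u (coeffConj 𝕜 ι b)⟫_𝕜 =
      ⟪Finsupp.linearCombination 𝕜 u b, Finsupp.linearCombination 𝕜 u a⟫_𝕜 := by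
  induction a using Finsupp.induction_linear with
  | zero => simp
  | add a₁ a₂ h₁ h₂ => simp only [map_add, inner_add_left, inner_add_right, h₁, h₂]
  | single i s =>
    induction b using Finsupp.induction_linear with
    | zero => simp
    | add b₁ b₂ h₁ h₂ => simp only [map_add, inner_add_left, inner_add_right, h₁, h₂]
    | single j t =>
      simp only [coeffConj_single, Finsupp.linearCombination_single, inner_smul_left,
        inner_smul_right, RCLike.conj_conj, hu i j]
      ring

theorem norm_linearCombination_coeffConj {u : ι → E} (hu : ∀ i j, ⟪u i, u j⟫_𝕜 = ⟪u j, u i⟫_𝕜)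
    (c : ι →₀ 𝕜) :
    ‖Finsupp.linearCombination 𝕜 u (coeffConj 𝕜 ι c)‖ = ‖Finsupp.linearCombination 𝕜 u c‖ := by
  rw [@norm_eq_sqrt_re_inner 𝕜, @norm_eq_sqrt_re_inner 𝕜, inner_linearCombination_coeffConj hu]

theorem exists_conjugation_fixing_of_inner_symm [CompleteSpace E] {u : ι → E}
    (hdense : Dense (Submodule.span 𝕜 (Set.range u) : Set E))
    (hu : ∀ i j, ⟪u i, u j⟫_𝕜 = ⟪u j, u i⟫_𝕜) :
    ∃ J : E ≃ₗᵢ⋆[𝕜] E, Function.Involutive J ∧ ∀ i, J (u i) = u i := by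
  have hcomb : DenseRange (Finsupp.linearCombination 𝕜 u) := by
    rwa [← Finsupp.range_linearCombination] at hdense
  let J : E ≃ₗᵢ⋆[𝕜] E := (coeffConj 𝕜 ι).extendOfIsometry
    (Finsupp.linearCombination 𝕜 u) (Finsupp.linearCombination 𝕜 u) hcomb hcomb
    (norm_linearCombination_coeffConj hu)
  have hfix : ∀ i, J (u i) = u i := fun i => by
    simpa [coeffConj_single] using LinearEquiv.extendOfIsometry_eq _ _ _ hcomb hcomb
      (norm_linearCombination_coeffConj hu) (Finsupp.single i 1)
  refine ⟨J, ?_, hfix⟩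
  have hid : (J : E →L⋆[𝕜] E).comp (J : E →L⋆[𝕜] E) = ContinuousLinearMap.id 𝕜 E := by
    refine ContinuousLinearMap.ext_on hdense ?_
    rintro _ ⟨i, rfl⟩
    change J (J (u i)) = u i
    rw [hfix, hfix]
  exact DFunLike.congr_fun hid

theorem inner_apply_apply_comm_of_commute [CompleteSpace E] {S T : E →L[𝕜] E}
    (hS : IsSelfAdjoint S) (hT : IsSelfAdjoint T) (hST : Commute S T) (x : E) :
    ⟪S x, T x⟫_𝕜 = ⟪T x, S x⟫_𝕜 :=
  calc ⟪S x, T x⟫_𝕜 = ⟪x, (S * T) x⟫_𝕜 := hS.isSymmetric x (T x)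
    _ = ⟪x, (T * S) x⟫_𝕜 := by rw [hST.eq]
    _ = ⟪T x, S x⟫_𝕜 := (hT.isSymmetric x (S x)).symm

theorem exists_conjugation_fixing_pow_apply [CompleteSpace E] {B : E →L[𝕜] E}
    (hB : IsSelfAdjoint B) {v : E}
    (hv : Dense (Submodule.span 𝕜 (Set.range fun n : ℕ => (B ^ n) v) : Set E)) :
    ∃ J : E ≃ₗᵢ⋆[𝕜] E, Function.Involutive J ∧ (∀ n : ℕ, J ((B ^ n) v) = (B ^ n) v) ∧
      ∀ x, J (B x) = B (J x) := by
  obtain ⟨J, hinv, hfix⟩ := exists_conjugation_fixing_of_inner_symm hv fun m n =>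
    inner_apply_apply_comm_of_commute (hB.pow m) (hB.pow n) (Commute.pow_pow_self B m n) v
  refine ⟨J, hinv, hfix, ?_⟩
  have hcomm : (J : E →L⋆[𝕜] E).comp B = B.comp (J : E →L⋆[𝕜] E) := by
    refine ContinuousLinearMap.ext_on hv ?_
    rintro _ ⟨n, rfl⟩
    change J (B ((B ^ n) v)) = B (J ((B ^ n) v))
    rw [hfix, ← mul_apply_eq_comp, ← pow_succ', hfix]
  exact DFunLike.congr_fun hcomm

end Conjugation

/-- Symmetry of a bounded conjugate-linear operator `A`, the analogue of self-adjointness: as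
`⟪A f, g⟫` is linear in `f` and in `g`, it says that this bilinear form is symmetric. -/
def IsSymmetricAntilinear {𝕜 E : Type*} [RCLike 𝕜] [NormedAddCommGroup E] [InnerProductSpace 𝕜 E]
    (A : E →L⋆[𝕜] E) : Prop :=
  ∀ f g, ⟪A f, g⟫_𝕜 = ⟪A g, f⟫_𝕜

namespace IsSymmetricAntilinear

section RCLike

variable {𝕜 E : Type*} [RCLike 𝕜] [NormedAddCommGroup E] [InnerProductSpace 𝕜 E]

theorem of_involutive {J : E ≃ₗᵢ⋆[𝕜] E} (hJ : Function.Involutive J) :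
    IsSymmetricAntilinear (J : E →L⋆[𝕜] E) := fun f g =>
  calc ⟪J f, g⟫_𝕜 = ⟪J f, J (J g)⟫_𝕜 := by rw [hJ g]
    _ = ⟪J g, f⟫_𝕜 := inner_map_map_of_antilinear_isometry J.toLinearIsometry f (J g)

variable [CompleteSpace E] {A C : E →L⋆[𝕜] E}

theorem star_comp (hA : IsSymmetricAntilinear A) (hC : IsSymmetricAntilinear C) :
    star (A.comp C : E →L[𝕜] E) = C.comp A := by
  refine ((ContinuousLinearMap.eq_adjoint_iff _ _).mpr fun f g => ?_).symm
  calc ⟪C (A f), g⟫_𝕜 = ⟪C g, A f⟫_𝕜 := hC _ _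
    _ = conj ⟪A f, C g⟫_𝕜 := (inner_conj_symm _ _).symm
    _ = conj ⟪A (C g), f⟫_𝕜 := by rw [hA]
    _ = ⟪f, A (C g)⟫_𝕜 := inner_conj_symm _ _

theorem isPositive_comp_self (hA : IsSymmetricAntilinear A) :
    (A.comp A : E →L[𝕜] E).IsPositive := by
  refine ContinuousLinearMap.isPositive_def'.mpr ⟨hA.star_comp hA, fun f => ?_⟩
  rw [ContinuousLinearMap.reApplyInnerSelf_apply, ContinuousLinearMap.comp_apply, hA]
  exact inner_self_nonneg

end RCLike

variable {H : Type*} [NormedAddCommGroup H] [InnerProductSpace ℂ H] [CompleteSpace H]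
  {A : H →L⋆[ℂ] H}

theorem exists_eq_sqrt_comp_linearIsometryEquiv_comp (hA : IsSymmetricAntilinear A)
    {J : H ≃ₗᵢ⋆[ℂ] H} (hJ : Function.Involutive J) (hcomm : ∀ f, J (A (A f)) = A (A (J f))) :
    ∃ W : H ≃ₗᵢ[ℂ] H, (∀ f, W (A (A f)) = A (A (W f))) ∧
      ∀ f, A f = CFC.sqrt (A.comp A : H →L[ℂ] H) (W (J f)) := by
  let T : H →L[ℂ] H := A.comp (J : H →L⋆[ℂ] H)
  have hstar : star T = (J : H →L⋆[ℂ] H).comp A := hA.star_comp (of_involutive hJ)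
  have hstar_mul : star T * T = A.comp A := by
    ext f
    rw [hstar]
    change J (A (A (J f))) = A (A f)
    rw [hcomm, hJ]
  have hmul_star : T * star T = A.comp A := by
    ext f
    rw [hstar]
    exact congrArg A (hJ (A f))
  have hnormal : IsStarNormal T := ⟨hstar_mul.trans hmul_star.symm⟩
  have habs : CFC.abs T = CFC.sqrt (A.comp A : H →L[ℂ] H) := congrArg CFC.sqrt hstar_mul
  have hsq : ∀ f, CFC.abs T (CFC.abs T f) = A (A f) :=
    DFunLike.congr_fun ((CFC.abs_mul_abs T).trans hstar_mul)
  obtain ⟨W, hWabs, habsW⟩ := exists_linearIsometryEquiv_cfcAbs_of_isStarNormal hnormal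
  refine ⟨W, fun f => ?_, fun f => ?_⟩
  · rw [← hsq, ← hsq, hWabs, habsW, ← habsW, hWabs]
  · rw [← habs, habsW]
    exact congrArg A (hJ f).symm

end IsSymmetricAntilinear

/-- **Spectral theorem for bounded symmetric anti-linear operators.**
If `A` is a bounded conjugate-linear map on a complex Hilbert space `X`, symmetric in the
sense that `⟪A f, g⟫ = ⟪A g, f⟫`, and `v` is a cyclic vector for the bounded positive
self-adjoint operator `A²`, then there are a conjugate-linear isometric involution `J` fixing
every `(A²)ⁿ v`, and a unitary `W` commuting with `A²`, such that `A = √(A²) ∘ W ∘ J`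
(the square root being the unique positive square root of `A²`). -/
theorem spectral_theorem_symmetric_antilinear
    {X : Type*} [NormedAddCommGroup X] [InnerProductSpace ℂ X] [CompleteSpace X]
    (A : X → X)
    (hadd : ∀ f g : X, A (f + g) = A f + A g)
    (hsmul : ∀ (c : ℂ) (f : X), A (c • f) = conj c • A f)
    (hbdd : ∃ Cb : ℝ, ∀ f : X, ‖A f‖ ≤ Cb * ‖f‖)
    (hsym : ∀ f g : X, ⟪A f, g⟫_ℂ = ⟪A g, f⟫_ℂ)
    (v : X)
    (hcyc : closure ((Submodule.span ℂ
        (Set.range fun n : ℕ => (fun x => A (A x))^[n] v) : Submodule ℂ X) : Set X)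
      = Set.univ) :
    ∃ (J : X → X) (W : X ≃ₗᵢ[ℂ] X) (R : X →L[ℂ] X),
      (∀ f g : X, J (f + g) = J f + J g) ∧
      (∀ (c : ℂ) (f : X), J (c • f) = conj c • J f) ∧
      (∀ f : X, ‖J f‖ = ‖f‖) ∧
      (∀ f : X, J (J f) = f) ∧
      (∀ n : ℕ, J ((fun x => A (A x))^[n] v) = (fun x => A (A x))^[n] v) ∧
      (∀ f : X, W (A (A f)) = A (A (W f))) ∧
      R.IsPositive ∧
      (∀ f : X, R (R f) = A (A f)) ∧
      (∀ f : X, A f = R (W (J f))) := by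
  obtain ⟨C, hC⟩ := hbdd
  let L : X →L⋆[ℂ] X := LinearMap.mkContinuous ⟨⟨A, hadd⟩, hsmul⟩ C hC
  have hL : IsSymmetricAntilinear L := hsym
  let B : X →L[ℂ] X := L.comp L
  have hB : B.IsPositive := hL.isPositive_comp_self
  have hpow : ∀ n : ℕ, (fun x => A (A x))^[n] v = (B ^ n) v := fun n => by
    rw [FunLike.coe_pow_eq_iterate]
    rfl
  simp only [hpow] at hcyc ⊢
  obtain ⟨J, hinv, hfix, hJB⟩ :=
    exists_conjugation_fixing_pow_apply hB.isSelfAdjoint (dense_iff_closure_eq.mpr hcyc)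
  obtain ⟨W, hWB, hfactor⟩ := hL.exists_eq_sqrt_comp_linearIsometryEquiv_comp hinv hJB
  have hB_nonneg : 0 ≤ B := (ContinuousLinearMap.nonneg_iff_isPositive B).mpr hB
  exact ⟨J, W, CFC.sqrt B, map_add J, J.map_smulₛₗ, J.norm_map, hinv, hfix, hWB,
    (ContinuousLinearMap.nonneg_iff_isPositive _).mp (CFC.sqrt_nonneg B),
    DFunLike.congr_fun (CFC.sqrt_mul_sqrt_self B hB_nonneg), hfactor⟩
end

section
/- Let Γ be a Hankel operator on ℓ²(ℕ, ℂ), H := Γ∘C the associated anti-linear Hankel operator, H̃ := H∘S, and u := He₀ its symbol. Let R denote the closure of the range of H. Assume that there exist vectors v, w ∈ R such that the closed linear span of {(H²)ⁿ v : n ≥ 0} equals R and the closed linear span of {(H̃²)ⁿ w : n ≥ 0} equals R (i.e. the restrictions of H² and of H̃² to R have simple spectrum). Then u itself is cyclic for both restrictions: the closed linear span of {(H²)ⁿ u : n ≥ 0} equals R, and the closed linear span of {(H̃²)ⁿ u : n ≥ 0} equals R. -/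
open scoped ComplexConjugate InnerProductSpace

/-!
Put `A = H²`, `B = (H S)²`, `R` the closure of the range of `H`, and `M` the closed span of the
orbit of `u` under `A`. Since `S S* = 1 - ⟪e₀, ·⟫ e₀`, one has `A - B = ⟪u, ·⟫ u`, so `M` is also
the closed span of the orbit of `u` under `B`.

If `T` is a symmetric anti-linear operator and `T²` has a cyclic vector, every bounded operator
commuting with `T²` is symmetric for the bilinear form `(f, g) ↦ ⟪T f, g⟫`. Applied to the
orthogonal projection onto `M`, with `T = H` and `T = H S`, this shows that `M` is stable under `H`
and `H S = S* H`. As `H M` is dense in `M`, it follows that `M` is stable under `S*`; hence `M`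
contains `S*ⁿ u = H Sⁿ e₀` for all `n`, and therefore `R`.
-/

section CyclicSubspace

variable {𝕜 E : Type*} [Ring 𝕜] [AddCommGroup E] [Module 𝕜 E] [TopologicalSpace E]
  [ContinuousAdd E] [ContinuousConstSMul 𝕜 E]

/-- The closed linear span of the orbit `v, A v, A² v, …`; `v` is a cyclic vector of the restriction
of `A` to an invariant closed subspace `R` exactly when this equals `R`. -/
def cyclicSubspace (A : E →L[𝕜] E) (v : E) : Submodule 𝕜 E :=
  (Submodule.span 𝕜 (Set.range fun n : ℕ => A^[n] v)).topologicalClosure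

lemma isClosed_cyclicSubspace (A : E →L[𝕜] E) (v : E) : IsClosed (cyclicSubspace A v : Set E) :=
  Submodule.isClosed_topologicalClosure _

lemma iterate_mem_cyclicSubspace (A : E →L[𝕜] E) (v : E) (n : ℕ) :
    A^[n] v ∈ cyclicSubspace A v :=
  Submodule.le_topologicalClosure _ (Submodule.subset_span ⟨n, rfl⟩)

lemma self_mem_cyclicSubspace (A : E →L[𝕜] E) (v : E) : v ∈ cyclicSubspace A v :=
  iterate_mem_cyclicSubspace A v 0

lemma cyclicSubspace_le {A : E →L[𝕜] E} {v : E} {K : Submodule 𝕜 E} (hK : IsClosed (K : Set E))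
    (hv : v ∈ K) (hA : Set.MapsTo A K K) : cyclicSubspace A v ≤ K := by
  refine Submodule.topologicalClosure_minimal _ (Submodule.span_le.2 ?_) hK
  rintro _ ⟨n, rfl⟩
  exact hA.iterate n hv

lemma mapsTo_cyclicSubspace (A : E →L[𝕜] E) (v : E) :
    Set.MapsTo A (cyclicSubspace A v) (cyclicSubspace A v) := by
  have hle : Submodule.span 𝕜 (Set.range fun n : ℕ => A^[n] v) ≤
      (cyclicSubspace A v).comap A.toLinearMap := by
    rw [Submodule.span_le]
    rintro _ ⟨n, rfl⟩
    rw [SetLike.mem_coe, Submodule.mem_comap, ContinuousLinearMap.coe_coe,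
      ← Function.iterate_succ_apply' A]
    exact iterate_mem_cyclicSubspace A v (n + 1)
  exact Submodule.topologicalClosure_minimal _ hle
    ((isClosed_cyclicSubspace A v).preimage A.continuous)

lemma cyclicSubspace_le_of_sub_mem_span {A B : E →L[𝕜] E} {u : E}
    (h : ∀ x, A x - B x ∈ Submodule.span 𝕜 {u}) : cyclicSubspace A u ≤ cyclicSubspace B u := by
  refine cyclicSubspace_le (isClosed_cyclicSubspace B u) (self_mem_cyclicSubspace B u)
    fun x hx => ?_
  have hspan : Submodule.span 𝕜 {u} ≤ cyclicSubspace B u :=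
    (Submodule.span_singleton_le_iff_mem _ _).2 (self_mem_cyclicSubspace B u)
  simpa using add_mem (hspan (h x)) (mapsTo_cyclicSubspace B u hx)

lemma cyclicSubspace_eq_of_sub_mem_span {A B : E →L[𝕜] E} {u : E}
    (h : ∀ x, A x - B x ∈ Submodule.span 𝕜 {u}) : cyclicSubspace A u = cyclicSubspace B u :=
  le_antisymm (cyclicSubspace_le_of_sub_mem_span h)
    (cyclicSubspace_le_of_sub_mem_span fun x => neg_sub (A x) (B x) ▸ neg_mem (h x))

end CyclicSubspace

/-- Symmetry of an anti-linear operator: the bilinear form `(f, g) ↦ ⟪T f, g⟫` is symmetric. -/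
def IsConjSymmetric {𝕜 E : Type*} [RCLike 𝕜] [NormedAddCommGroup E] [InnerProductSpace 𝕜 E]
    (T : E →L⋆[𝕜] E) : Prop :=
  ∀ f g, ⟪T f, g⟫_𝕜 = ⟪T g, f⟫_𝕜

namespace IsConjSymmetric

open ContinuousLinearMap

variable {𝕜 E : Type*} [RCLike 𝕜] [NormedAddCommGroup E] [InnerProductSpace 𝕜 E]
  {T : E →L⋆[𝕜] E}

lemma isSymmetric_comp_self (hT : IsConjSymmetric T) :
    (T ∘SL T : E →L[𝕜] E).toLinearMap.IsSymmetric := fun x y => by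
  change ⟪T (T x), y⟫_𝕜 = ⟪x, T (T y)⟫_𝕜
  rw [hT, ← inner_conj_symm, hT, inner_conj_symm]

lemma inner_iterate_comp_self_left (hT : IsConjSymmetric T) (n : ℕ) (x y : E) :
    ⟪(T ∘SL T)^[n] x, y⟫_𝕜 = ⟪x, (T ∘SL T)^[n] y⟫_𝕜 := by
  simpa only [Module.End.pow_apply, coe_coe] using hT.isSymmetric_comp_self.pow n x y

/-- On orbits both sides equal `⟪T v, A ^ (m + n) (L v)⟫`, where `A = T²`. -/
lemma inner_map_comm_of_commute (hT : IsConjSymmetric T) {L : E →L[𝕜] E}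
    (hL : Commute L (T ∘SL T)) {v x y : E} (hx : x ∈ cyclicSubspace (T ∘SL T) v)
    (hy : y ∈ cyclicSubspace (T ∘SL T) v) : ⟪T (L x), y⟫_𝕜 = ⟪T x, L y⟫_𝕜 := by
  have hTA : Function.Commute T (T ∘SL T : E →L[𝕜] E) := fun _ => rfl
  have hLA : Function.Commute L (T ∘SL T : E →L[𝕜] E) := DFunLike.congr_fun hL
  have horbit (m n : ℕ) : ⟪T (L ((T ∘SL T)^[m] v)), (T ∘SL T)^[n] v⟫_𝕜 =
      ⟪T ((T ∘SL T)^[m] v), L ((T ∘SL T)^[n] v)⟫_𝕜 := by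
    rw [hT, hTA.iterate_right n v, hTA.iterate_right m v, hLA.iterate_right n v,
      hLA.iterate_right m v, hT.inner_iterate_comp_self_left, hT.inner_iterate_comp_self_left,
      ← Function.iterate_add_apply, ← Function.iterate_add_apply, add_comm]
  have horbit_left (m : ℕ) : ⟪T (L ((T ∘SL T)^[m] v)), y⟫_𝕜 = ⟪T ((T ∘SL T)^[m] v), L y⟫_𝕜 :=
    eqOn_closure_span (f := innerSL 𝕜 (T (L ((T ∘SL T)^[m] v))))
      (g := (innerSL 𝕜 (T ((T ∘SL T)^[m] v))).comp L)
      (Set.forall_mem_range.2 fun n => horbit m n) hy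
  rw [hT, hT x]
  refine eqOn_closure_span (f := (innerSL 𝕜 (T y)).comp L) (g := innerSL 𝕜 (T (L y)))
    (Set.forall_mem_range.2 fun m => ?_) hx
  change ⟪T y, L ((T ∘SL T)^[m] v)⟫_𝕜 = ⟪T (L y), (T ∘SL T)^[m] v⟫_𝕜
  rw [hT y, horbit_left, hT (L y)]

lemma commute_starProjection_comp_self (hT : IsConjSymmetric T) {M : Submodule 𝕜 E}
    [M.HasOrthogonalProjection] (hM : Set.MapsTo (T ∘SL T) M M) :
    Commute M.starProjection (T ∘SL T) := by
  rw [IsIdempotentElem.commute_iff M.isIdempotentElem_starProjection,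
    Submodule.range_starProjection, Submodule.ker_starProjection]
  exact ⟨hM, hT.isSymmetric_comp_self.orthogonalComplement_mem_invtSubmodule hM⟩

lemma mapsTo_of_mapsTo_comp_self (hT : IsConjSymmetric T) {v : E}
    (hTv : Set.MapsTo T (cyclicSubspace (T ∘SL T) v) (cyclicSubspace (T ∘SL T) v))
    {M : Submodule 𝕜 E} [M.HasOrthogonalProjection] (hMv : M ≤ cyclicSubspace (T ∘SL T) v)
    (hM : Set.MapsTo (T ∘SL T) M M) : Set.MapsTo T M M := by
  intro x hx
  set y := T x - M.starProjection (T x) with hy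
  have hyM : y ∈ Mᗮ := Submodule.sub_starProjection_mem_orthogonal _
  have hyv : y ∈ cyclicSubspace (T ∘SL T) v :=
    sub_mem (hTv (hMv hx)) (hMv (Submodule.starProjection_apply_mem _ _))
  have hTxy : ⟪T x, y⟫_𝕜 = 0 := by
    rw [← Submodule.starProjection_eq_self_iff.2 hx,
      hT.inner_map_comm_of_commute (hT.commute_starProjection_comp_self hM) (hMv hx) hyv,
      (Submodule.starProjection_apply_eq_zero_iff M).2 hyM, inner_zero_right]
  have hyy : ⟪y, y⟫_𝕜 = 0 := by
    nth_rw 1 [hy]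
    rw [inner_sub_left, hTxy, hyM _ (Submodule.starProjection_apply_mem _ _), sub_zero]
  exact Submodule.starProjection_eq_self_iff.1 (sub_eq_zero.1 (inner_self_eq_zero.1 hyy)).symm

lemma orthogonal_range (hT : IsConjSymmetric T) : T.rangeᗮ = T.ker := by
  ext x
  simp only [Submodule.mem_orthogonal, LinearMap.mem_range, LinearMap.mem_ker]
  constructor
  · intro h
    exact inner_self_eq_zero.1 ((hT x (T x)).trans (h _ ⟨_, rfl⟩))
  · rintro h _ ⟨y, rfl⟩
    exact (hT y x).trans (by rw [show T x = 0 from h, inner_zero_left])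

lemma topologicalClosure_map_eq [CompleteSpace E] (hT : IsConjSymmetric T) {K : Submodule 𝕜 E}
    (hK : IsClosed (K : Set E)) (hKT : K ≤ T.range.topologicalClosure) (hTK : Set.MapsTo T K K) :
    (K.map T.toLinearMap).topologicalClosure = K := by
  have hle : (K.map T.toLinearMap).topologicalClosure ≤ K :=
    Submodule.topologicalClosure_minimal _ (Submodule.map_le_iff_le_comap.2 hTK) hK
  have hbot : (K.map T.toLinearMap).topologicalClosureᗮ ⊓ K = ⊥ := by
    rw [Submodule.orthogonal_closure, eq_bot_iff]
    rintro y ⟨hy, hyK⟩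
    have hTy : T y = 0 := inner_self_eq_zero (𝕜 := 𝕜).1 <|
      (hT y (T y)).trans (hy _ ⟨T y, hTK hyK, rfl⟩)
    have hyT : y ∈ T.rangeᗮ := hT.orthogonal_range ▸ hTy
    rw [← Submodule.orthogonal_closure] at hyT
    exact inner_self_eq_zero.1 (hyT y (hKT hyK))
  have := Submodule.sup_orthogonal_inf_of_hasOrthogonalProjection hle
  rwa [hbot, sup_bot_eq] at this

end IsConjSymmetric

section Hankel

open ContinuousLinearMap

variable {𝕜 E : Type*} [RCLike 𝕜] [NormedAddCommGroup E] [InnerProductSpace 𝕜 E] [CompleteSpace E]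
  {S : E →L[𝕜] E} {H : E →L⋆[𝕜] E}

lemma IsConjSymmetric.comp_of_hankel (hH : IsConjSymmetric H)
    (hHankel : ∀ x, H (S x) = adjoint S (H x)) : IsConjSymmetric (H ∘SL S) := fun f g => by
  change ⟪H (S f), g⟫_𝕜 = ⟪H (S g), f⟫_𝕜
  rw [hH, hHankel, adjoint_inner_left]

lemma IsConjSymmetric.sq_sub_sq_comp_of_hankel (hH : IsConjSymmetric H)
    (hHankel : ∀ x, H (S x) = adjoint S (H x)) {e : E}
    (hS : ∀ x, S (adjoint S x) = x - ⟪e, x⟫_𝕜 • e) (x : E) :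
    H (H x) - H (S (H (S x))) = ⟪H e, x⟫_𝕜 • H e := by
  rw [hHankel x, hS, map_sub, map_smulₛₗ, inner_conj_symm, hH x e, sub_sub_cancel]

lemma IsConjSymmetric.range_le_of_mapsTo (hH : IsConjSymmetric H)
    (hHankel : ∀ x, H (S x) = adjoint S (H x)) {e : E} (he : cyclicSubspace S e = ⊤)
    {M : Submodule 𝕜 E} (hM : IsClosed (M : Set E)) (hMH : M ≤ H.range.topologicalClosure)
    (heM : H e ∈ M) (hHM : Set.MapsTo H M M) (hHSM : Set.MapsTo (H ∘SL S) M M) :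
    H.range ≤ M := by
  have hadj : M ≤ M.comap (adjoint S).toLinearMap := by
    conv_lhs => rw [← hH.topologicalClosure_map_eq hM hMH hHM]
    refine Submodule.topologicalClosure_minimal _ ?_ (hM.preimage (adjoint S).continuous)
    rintro _ ⟨x, hx, rfl⟩
    change adjoint S (H x) ∈ M
    exact hHankel x ▸ hHSM hx
  have htop : cyclicSubspace S e ≤ M.comap H.toLinearMap :=
    cyclicSubspace_le (hM.preimage H.continuous) heM fun x hx => by
      change H (S x) ∈ M
      exact hHankel x ▸ hadj hx
  rintro _ ⟨x, rfl⟩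
  exact htop (he ▸ Submodule.mem_top)

/-- `S` and `e` abstract the forward shift of `ℓ²` and `e₀`; the truncated shift of `𝕜ⁿ` is another
instance. -/
theorem symbol_cyclic_of_simple_spectrum_general (hH : IsConjSymmetric H)
    (hHankel : ∀ x, H (S x) = adjoint S (H x)) {e : E}
    (hS : ∀ x, S (adjoint S x) = x - ⟪e, x⟫_𝕜 • e) (he : cyclicSubspace S e = ⊤) {v w : E}
    (hv : cyclicSubspace (H ∘SL H) v = H.range.topologicalClosure)
    (hw : cyclicSubspace ((H ∘SL S) ∘SL (H ∘SL S)) w = H.range.topologicalClosure) :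
    cyclicSubspace (H ∘SL H) (H e) = H.range.topologicalClosure ∧
      cyclicSubspace ((H ∘SL S) ∘SL (H ∘SL S)) (H e) = H.range.topologicalClosure := by
  have hmem (x : E) : H x ∈ H.range.topologicalClosure :=
    Submodule.le_topologicalClosure _ ⟨x, rfl⟩
  have hAB : cyclicSubspace (H ∘SL H) (H e) = cyclicSubspace ((H ∘SL S) ∘SL (H ∘SL S)) (H e) :=
    cyclicSubspace_eq_of_sub_mem_span fun x => Submodule.mem_span_singleton.2
      ⟨_, (hH.sq_sub_sq_comp_of_hankel hHankel hS x).symm⟩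
  have hclosed := isClosed_cyclicSubspace (H ∘SL H) (H e)
  have hle : cyclicSubspace (H ∘SL H) (H e) ≤ H.range.topologicalClosure :=
    cyclicSubspace_le (Submodule.isClosed_topologicalClosure _) (hmem e) fun x _ => hmem (H x)
  have : CompleteSpace (cyclicSubspace (H ∘SL H) (H e)) := hclosed.completeSpace_coe
  have hHM := hH.mapsTo_of_mapsTo_comp_self (v := v) (hv ▸ fun x _ => hmem x) (hv ▸ hle)
    (mapsTo_cyclicSubspace _ _)
  have hHSM := (hH.comp_of_hankel hHankel).mapsTo_of_mapsTo_comp_self (v := w)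
    (hw ▸ fun x _ => hmem (S x)) (hw ▸ hle) (hAB ▸ mapsTo_cyclicSubspace _ _)
  have hrange := hH.range_le_of_mapsTo hHankel he hclosed hle (self_mem_cyclicSubspace _ _) hHM hHSM
  have heq : cyclicSubspace (H ∘SL H) (H e) = H.range.topologicalClosure :=
    le_antisymm hle (Submodule.topologicalClosure_minimal _ hrange hclosed)
  exact ⟨heq, hAB ▸ heq⟩

end Hankel

section SequenceSpace

open ContinuousLinearMap
open scoped lp

variable {𝕜 ι : Type*} [RCLike 𝕜]

lemma inner_star_left_comm (x y : ℓ²(ι, 𝕜)) : ⟪star x, y⟫_𝕜 = ⟪star y, x⟫_𝕜 := by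
  simp [lp.inner_eq_tsum, mul_comm]

/-- The anti-linear operator `Γ ∘ C`, where the coordinatewise conjugation `C` is the `star` of the
sequence space. -/
noncomputable def compConj (Γ : ℓ²(ι, 𝕜) →L[𝕜] ℓ²(ι, 𝕜)) : ℓ²(ι, 𝕜) →L⋆[𝕜] ℓ²(ι, 𝕜) :=
  Γ ∘SL (starL 𝕜 : ℓ²(ι, 𝕜) ≃L⋆[𝕜] ℓ²(ι, 𝕜)).toContinuousLinearMap

lemma compConj_apply (Γ : ℓ²(ι, 𝕜) →L[𝕜] ℓ²(ι, 𝕜)) (x : ℓ²(ι, 𝕜)) :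
    compConj Γ x = Γ (star x) :=
  rfl

variable [DecidableEq ι]

lemma inner_single_one_left (i : ι) (x : ℓ²(ι, 𝕜)) : ⟪lp.single 2 i (1 : 𝕜), x⟫_𝕜 = x i := by
  simp [lp.inner_single_left]

lemma star_single_one (i : ι) : star (lp.single 2 i 1 : ℓ²(ι, 𝕜)) = lp.single 2 i 1 := by
  ext j
  by_cases h : j = i <;> simp [h, lp.single_apply]

variable (𝕜 ι) in
lemma dense_span_range_single_one :
    Dense (Submodule.span 𝕜 (Set.range fun i : ι => (lp.single 2 i 1 : ℓ²(ι, 𝕜))) :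
      Set ℓ²(ι, 𝕜)) := by
  let b : HilbertBasis ι 𝕜 ℓ²(ι, 𝕜) := .ofRepr (.refl 𝕜 _)
  have hb : (fun i : ι => (lp.single 2 i 1 : ℓ²(ι, 𝕜))) = b := funext b.repr_symm_single
  rw [hb]
  exact Submodule.dense_iff_topologicalClosure_eq_top.2 b.dense_span

lemma apply_star_eq_star_adjoint_of_symm {Γ : ℓ²(ι, 𝕜) →L[𝕜] ℓ²(ι, 𝕜)}
    (hΓ : ∀ i j, Γ (lp.single 2 j 1) i = Γ (lp.single 2 i 1) j) (x : ℓ²(ι, 𝕜)) :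
    Γ (star x) = star (adjoint Γ x) := by
  have hcomp : compConj Γ =
      (starL 𝕜 : ℓ²(ι, 𝕜) ≃L⋆[𝕜] ℓ²(ι, 𝕜)).toContinuousLinearMap ∘SL adjoint Γ := by
    refine ext_on (dense_span_range_single_one 𝕜 ι) (Set.forall_mem_range.2 fun j => ?_)
    ext i
    change Γ (star (lp.single 2 j 1)) i = star (adjoint Γ (lp.single 2 j 1) i)
    rw [star_single_one, ← inner_single_one_left i (adjoint Γ _), adjoint_inner_right,
      RCLike.star_def, inner_conj_symm, inner_single_one_left, hΓ]
  exact DFunLike.congr_fun hcomp x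

lemma isConjSymmetric_compConj_of_symm {Γ : ℓ²(ι, 𝕜) →L[𝕜] ℓ²(ι, 𝕜)}
    (hΓ : ∀ i j, Γ (lp.single 2 j 1) i = Γ (lp.single 2 i 1) j) :
    IsConjSymmetric (compConj Γ) := fun f g =>
  calc
    ⟪Γ (star f), g⟫_𝕜 = ⟪star f, adjoint Γ g⟫_𝕜 := (adjoint_inner_right Γ _ _).symm
    _ = ⟪star (adjoint Γ g), f⟫_𝕜 := inner_star_left_comm _ _
    _ = ⟪Γ (star g), f⟫_𝕜 := by rw [apply_star_eq_star_adjoint_of_symm hΓ]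

/-- The forward shift of `ℓ²(ℕ, 𝕜)`, characterized by its coordinates. -/
structure IsForwardShift (S : ℓ²(ℕ, 𝕜) →L[𝕜] ℓ²(ℕ, 𝕜)) : Prop where
  apply_zero : ∀ x, S x 0 = 0
  apply_succ : ∀ x n, S x (n + 1) = x n

namespace IsForwardShift

variable {S Γ : ℓ²(ℕ, 𝕜) →L[𝕜] ℓ²(ℕ, 𝕜)}

lemma apply_single_one (hS : IsForwardShift S) (n : ℕ) :
    S (lp.single 2 n 1) = lp.single 2 (n + 1) 1 := by
  ext (_ | m)
  · simp [hS.apply_zero, lp.single_apply]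
  · simp [hS.apply_succ, lp.single_apply, Pi.single_apply]

lemma adjoint_apply (hS : IsForwardShift S) (x : ℓ²(ℕ, 𝕜)) (n : ℕ) :
    adjoint S x n = x (n + 1) := by
  rw [← inner_single_one_left, adjoint_inner_right, hS.apply_single_one, inner_single_one_left]

lemma apply_star (hS : IsForwardShift S) (x : ℓ²(ℕ, 𝕜)) : S (star x) = star (S x) := by
  ext (_ | n) <;> simp [hS.apply_zero, hS.apply_succ]

lemma apply_adjoint (hS : IsForwardShift S) (x : ℓ²(ℕ, 𝕜)) :
    S (adjoint S x) = x - ⟪lp.single 2 0 (1 : 𝕜), x⟫_𝕜 • lp.single 2 0 (1 : 𝕜) := by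
  rw [inner_single_one_left]
  ext (_ | n) <;> rw [lp.coeFn_sub, Pi.sub_apply, lp.coeFn_smul, Pi.smul_apply]
  · simp [hS.apply_zero]
  · simp [hS.apply_succ, hS.adjoint_apply, lp.single_apply]

lemma iterate_single_zero (hS : IsForwardShift S) (n : ℕ) :
    S^[n] (lp.single 2 0 1) = lp.single 2 n 1 := by
  induction n with
  | zero => rfl
  | succ n ih => rw [Function.iterate_succ_apply', ih, hS.apply_single_one]

lemma cyclicSubspace_single_zero (hS : IsForwardShift S) :
    cyclicSubspace S (lp.single 2 0 1) = ⊤ := by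
  simp only [cyclicSubspace, hS.iterate_single_zero]
  exact Submodule.dense_iff_topologicalClosure_eq_top.1 (dense_span_range_single_one 𝕜 ℕ)

lemma hankel_single_one_apply (hS : IsForwardShift S)
    (hΓ : ∀ x, Γ (S x) = adjoint S (Γ x)) (n m : ℕ) :
    Γ (lp.single 2 n 1) m = Γ (lp.single 2 0 1) (m + n) := by
  induction n generalizing m with
  | zero => rfl
  | succ n ih =>
    rw [← hS.apply_single_one, hΓ, hS.adjoint_apply, ih, add_right_comm, add_assoc]

lemma isConjSymmetric_compConj_of_hankel (hS : IsForwardShift S)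
    (hΓ : ∀ x, Γ (S x) = adjoint S (Γ x)) : IsConjSymmetric (compConj Γ) :=
  isConjSymmetric_compConj_of_symm fun i j => by
    rw [hS.hankel_single_one_apply hΓ j, hS.hankel_single_one_apply hΓ i, add_comm]

lemma compConj_hankel (hS : IsForwardShift S) (hΓ : ∀ x, Γ (S x) = adjoint S (Γ x))
    (x : ℓ²(ℕ, 𝕜)) : compConj Γ (S x) = adjoint S (compConj Γ x) := by
  rw [compConj_apply, ← hS.apply_star, hΓ, compConj_apply]

end IsForwardShift

end SequenceSpace

/-- **Cyclicity of the symbol.** For a bounded Hankel operator `Γ` on `ℓ²(ℕ, ℂ)`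
(`ΓS = S*Γ`), with associated anti-linear Hankel operator `H = Γ∘C`, truncated operator
`H̃ = H∘S` and symbol `u = H e₀`: if the restrictions of `H²` and `H̃²` to
`R = closure (Ran H)` have simple spectrum (i.e. admit cyclic vectors `v, w ∈ R`), then the
symbol `u` is itself a cyclic vector for both restrictions. -/
theorem symbol_cyclic_of_simple_spectrum
    (S Sstar Γ : lp (fun _ : ℕ => ℂ) 2 →L[ℂ] lp (fun _ : ℕ => ℂ) 2)
    (hS0 : ∀ x : lp (fun _ : ℕ => ℂ) 2, S x 0 = 0)
    (hSsucc : ∀ (x : lp (fun _ : ℕ => ℂ) 2) (n : ℕ), S x (n + 1) = x n)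
    (hSstar : ∀ (x : lp (fun _ : ℕ => ℂ) 2) (n : ℕ), Sstar x n = x (n + 1))
    (hHankel : ∀ x : lp (fun _ : ℕ => ℂ) 2, Γ (S x) = Sstar (Γ x))
    (C : lp (fun _ : ℕ => ℂ) 2 → lp (fun _ : ℕ => ℂ) 2)
    (hC : ∀ (x : lp (fun _ : ℕ => ℂ) 2) (n : ℕ), C x n = conj (x n))
    (H : lp (fun _ : ℕ => ℂ) 2 → lp (fun _ : ℕ => ℂ) 2)
    (hH : ∀ x, H x = Γ (C x))
    (e0 : lp (fun _ : ℕ => ℂ) 2) (he0 : e0 0 = 1) (he0' : ∀ n : ℕ, n ≠ 0 → e0 n = 0)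
    (u : lp (fun _ : ℕ => ℂ) 2) (hu : u = H e0)
    (R : Set (lp (fun _ : ℕ => ℂ) 2)) (hR : R = closure (Set.range H))
    (v w : lp (fun _ : ℕ => ℂ) 2) (hv : v ∈ R) (hw : w ∈ R)
    (hvcyc : closure ((Submodule.span ℂ
        (Set.range fun n : ℕ => (fun x => H (H x))^[n] v) :
          Submodule ℂ (lp (fun _ : ℕ => ℂ) 2)) : Set (lp (fun _ : ℕ => ℂ) 2)) = R)
    (hwcyc : closure ((Submodule.span ℂ
        (Set.range fun n : ℕ => (fun x => H (S (H (S x))))^[n] w) :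
          Submodule ℂ (lp (fun _ : ℕ => ℂ) 2)) : Set (lp (fun _ : ℕ => ℂ) 2)) = R) :
    closure ((Submodule.span ℂ
        (Set.range fun n : ℕ => (fun x => H (H x))^[n] u) :
          Submodule ℂ (lp (fun _ : ℕ => ℂ) 2)) : Set (lp (fun _ : ℕ => ℂ) 2)) = R ∧
    closure ((Submodule.span ℂ
        (Set.range fun n : ℕ => (fun x => H (S (H (S x))))^[n] u) :
          Submodule ℂ (lp (fun _ : ℕ => ℂ) 2)) : Set (lp (fun _ : ℕ => ℂ) 2)) = R := by
  have hshift : IsForwardShift S := ⟨hS0, hSsucc⟩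
  obtain rfl : Sstar = ContinuousLinearMap.adjoint S := by
    ext x n
    rw [hSstar, hshift.adjoint_apply]
  obtain rfl : H = compConj Γ := by
    funext x
    rw [hH, compConj_apply]
    congr 1
    ext n
    exact hC x n
  obtain rfl : e0 = lp.single 2 0 1 := by
    ext (_ | n)
    · rw [he0, lp.single_apply_self]
    · rw [he0' _ n.succ_ne_zero, lp.single_apply_ne _ _ _ n.succ_ne_zero]
  subst hu hR
  have hcyclic := symbol_cyclic_of_simple_spectrum_general
    (hshift.isConjSymmetric_compConj_of_hankel hHankel) (hshift.compConj_hankel hHankel)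
    hshift.apply_adjoint hshift.cyclicSubspace_single_zero
    (SetLike.coe_injective hvcyc) (SetLike.coe_injective hwcyc)
  exact ⟨congrArg SetLike.coe hcyclic.1, congrArg SetLike.coe hcyclic.2⟩
end

section
/- Let Γ be a Hankel operator on ℓ²(ℕ, ℂ) and let H := Γ∘C be the associated anti-linear Hankel operator. Then the kernel of H is trivial, Ker H = {0}, if and only if the vector e₀ belongs to the closure of the range of H but does not belong to the range of H itself. -/
open scoped ComplexConjugate InnerProductSpace

/-!
An anti-linear Hankel operator `H` satisfies `⟪H x, y⟫ = ⟪H y, x⟫`, because its matrix entries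
depend only on the sum of the indices; hence the closure of its range is `(ker H)ᗮ`.

If `H` is injective, its range is therefore dense, and `H x = e₀` would give
`H (S x) = S* e₀ = 0`, hence `x = 0`. Conversely, suppose `e₀` is in the closure of the range but
not in the range, and let `H x = 0`. Then `x ⊥ e₀`, so `x = S (S* x)` and `S* (H (S* x)) = H x = 0`,
i.e. `H (S* x)` is a multiple of `e₀`; as `e₀` is not in the range, `H (S* x) = 0`. So `ker H` is
`S*`-invariant and orthogonal to `e₀`, which forces every coordinate of its elements to vanish.
-/

open Function

section Antilinear

variable {𝕜 E ι : Type*} [RCLike 𝕜] [NormedAddCommGroup E] [InnerProductSpace 𝕜 E]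

theorem eq_of_hilbertBasis_repr_eq (b : HilbertBasis ι 𝕜 E) {x y : E}
    (h : ∀ i, b.repr x i = b.repr y i) : x = y :=
  b.repr.injective (lp.ext (funext h))

theorem inner_apply_comm_of_hilbertBasis (b : HilbertBasis ι 𝕜 E) {H : E →L⋆[𝕜] E}
    (h : ∀ i j, ⟪H (b i), b j⟫_𝕜 = ⟪H (b j), b i⟫_𝕜) (x y : E) :
    ⟪H x, y⟫_𝕜 = ⟪H y, x⟫_𝕜 := by
  let B : E →L[𝕜] E →L[𝕜] 𝕜 := (innerSL 𝕜).comp H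
  have dense_span : Dense (Submodule.span 𝕜 (Set.range b) : Set E) :=
    Submodule.dense_iff_topologicalClosure_eq_top.2 b.dense_span
  have flip_eq : B = B.flip := by
    refine ContinuousLinearMap.ext_on dense_span (Set.forall_mem_range.2 fun i ↦ ?_)
    refine ContinuousLinearMap.ext_on dense_span (Set.forall_mem_range.2 fun j ↦ ?_)
    exact h i j
  exact DFunLike.congr_fun (DFunLike.congr_fun flip_eq x) y

variable {H : E →L⋆[𝕜] E}

theorem orthogonal_range_eq_ker_of_inner_apply_comm (h : ∀ x y, ⟪H x, y⟫_𝕜 = ⟪H y, x⟫_𝕜) :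
    H.rangeᗮ = H.ker := by
  ext x
  calc x ∈ H.rangeᗮ ↔ ∀ y, ⟪H y, x⟫_𝕜 = 0 := by simp [Submodule.mem_orthogonal]
    _ ↔ ∀ y, ⟪H x, y⟫_𝕜 = 0 := by simp only [h x]
    _ ↔ x ∈ H.ker :=
      ⟨fun hx ↦ inner_self_eq_zero.1 (hx (H x)),
        fun hx y ↦ by rw [show H x = 0 from hx, inner_zero_left]⟩

theorem closure_range_eq_orthogonal_ker_of_inner_apply_comm [CompleteSpace E]
    (h : ∀ x y, ⟪H x, y⟫_𝕜 = ⟪H y, x⟫_𝕜) : closure (Set.range H) = H.kerᗮ := by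
  rw [← orthogonal_range_eq_ker_of_inner_apply_comm h, Submodule.orthogonal_orthogonal_eq_closure,
    Submodule.topologicalClosure_coe]
  rfl

end Antilinear

section Shift

variable {𝕜 E : Type*} [RCLike 𝕜] [NormedAddCommGroup E] [InnerProductSpace 𝕜 E]

/-- `S` is the forward (unilateral) shift with respect to the Hilbert basis `b`. The coordinates
determine `S`, so it is taken to be a mere function; linearity and continuity follow. -/
structure IsForwardShift_s2 (b : HilbertBasis ℕ 𝕜 E) (S : E → E) : Prop where
  repr_zero (x : E) : b.repr (S x) 0 = 0
  repr_succ (x : E) (n : ℕ) : b.repr (S x) (n + 1) = b.repr x n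

/-- `T` is the backward shift with respect to the Hilbert basis `b`, that is, the adjoint of the
forward shift. As for `IsForwardShift`, it is a function pinned down by its coordinates. -/
def IsBackwardShift (b : HilbertBasis ℕ 𝕜 E) (T : E → E) : Prop :=
  ∀ (x : E) (n : ℕ), b.repr (T x) n = b.repr x (n + 1)

variable {b : HilbertBasis ℕ 𝕜 E} {S T : E → E}

namespace IsForwardShift_s2

theorem apply_basis (hS : IsForwardShift_s2 b S) (n : ℕ) : S (b n) = b (n + 1) := by
  refine eq_of_hilbertBasis_repr_eq b fun m ↦ ?_
  cases m with
  | zero => simp [hS.repr_zero, b.repr_self]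
  | succ m => simp [hS.repr_succ, b.repr_self, Pi.single_apply]

theorem eq_zero_of_apply_eq_zero (hS : IsForwardShift_s2 b S) {x : E} (h : S x = 0) : x = 0 :=
  eq_of_hilbertBasis_repr_eq b fun n ↦ by simp [← hS.repr_succ, h]

theorem apply_backward (hS : IsForwardShift_s2 b S) (hT : IsBackwardShift b T) {x : E}
    (hx : b.repr x 0 = 0) : S (T x) = x := by
  refine eq_of_hilbertBasis_repr_eq b fun n ↦ ?_
  cases n with
  | zero => rw [hS.repr_zero, hx]
  | succ n => rw [hS.repr_succ, hT]

end IsForwardShift_s2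

namespace IsBackwardShift

theorem apply_basis_zero (hT : IsBackwardShift b T) : T (b 0) = 0 :=
  eq_of_hilbertBasis_repr_eq b fun n ↦ by simp [hT _ n, b.repr_self]

theorem eq_smul_basis_zero (hT : IsBackwardShift b T) {x : E} (hx : T x = 0) :
    x = b.repr x 0 • b 0 := by
  refine eq_of_hilbertBasis_repr_eq b fun n ↦ ?_
  cases n with
  | zero => simp [b.repr_self]
  | succ n => simp [← hT x n, hx, b.repr_self]

theorem eq_zero_of_mapsTo (hT : IsBackwardShift b T) {K : Set E} (hK : Set.MapsTo T K K)
    (hK_zero : ∀ x ∈ K, b.repr x 0 = 0) {x : E} (hx : x ∈ K) : x = 0 := by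
  have repr_eq_zero (n : ℕ) : ∀ y ∈ K, b.repr y n = 0 := by
    induction n with
    | zero => exact hK_zero
    | succ n ih => exact fun y hy ↦ hT y n ▸ ih (T y) (hK hy)
  exact eq_of_hilbertBasis_repr_eq b fun n ↦ by simp [repr_eq_zero n x hx]

end IsBackwardShift

theorem repr_apply_basis_of_semiconj (hS : IsForwardShift_s2 b S) (hT : IsBackwardShift b T)
    {H : E → E} (hH : Semiconj H S T) (m n : ℕ) :
    b.repr (H (b m)) n = b.repr (H (b 0)) (n + m) := by
  induction m generalizing n with
  | zero => rfl
  | succ m ih => rw [← hS.apply_basis, hH, hT, ih, Nat.add_right_comm, Nat.add_assoc]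

theorem inner_apply_comm_of_semiconj (hS : IsForwardShift_s2 b S) (hT : IsBackwardShift b T)
    {H : E →L⋆[𝕜] E} (hH : Semiconj H S T) (x y : E) : ⟪H x, y⟫_𝕜 = ⟪H y, x⟫_𝕜 := by
  refine inner_apply_comm_of_hilbertBasis b (fun m n ↦ ?_) x y
  rw [← inner_conj_symm, ← b.repr_apply_apply, ← inner_conj_symm, ← b.repr_apply_apply,
    repr_apply_basis_of_semiconj hS hT hH, repr_apply_basis_of_semiconj hS hT hH n, add_comm]

section Semilinear

variable {σ : 𝕜 →+* 𝕜} {H : E →ₛₗ[σ] E}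

theorem basis_zero_notMem_range_of_semiconj (hS : IsForwardShift_s2 b S) (hT : IsBackwardShift b T)
    (hH : Semiconj H S T) (hker : H.ker = ⊥) : b 0 ∉ Set.range H := by
  rintro ⟨x, hx⟩
  have apply_shift_eq_zero : H (S x) = 0 := by rw [hH, hx, hT.apply_basis_zero]
  have x_eq_zero : x = 0 :=
    hS.eq_zero_of_apply_eq_zero (LinearMap.ker_eq_bot'.1 hker _ apply_shift_eq_zero)
  exact b.orthonormal.ne_zero 0 (by rw [← hx, x_eq_zero, map_zero])

theorem mapsTo_ker_of_semiconj [RingHomSurjective σ] (hS : IsForwardShift_s2 b S)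
    (hT : IsBackwardShift b T) (hH : Semiconj H S T) (hrange : b 0 ∉ Set.range H)
    (hker : ∀ x ∈ H.ker, b.repr x 0 = 0) : Set.MapsTo T H.ker H.ker := by
  intro x hx
  have backward_apply_eq_zero : T (H (T x)) = 0 := by
    rw [← hH, hS.apply_backward hT (hker x hx), LinearMap.mem_ker.1 hx]
  have apply_eq_smul := hT.eq_smul_basis_zero backward_apply_eq_zero
  have smul_mem_range : b.repr (H (T x)) 0 • b 0 ∈ LinearMap.range H := ⟨T x, apply_eq_smul⟩
  have coeff_eq_zero : b.repr (H (T x)) 0 = 0 := by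
    by_contra coeff_ne_zero
    exact hrange ((Submodule.smul_mem_iff _ coeff_ne_zero).1 smul_mem_range)
  rwa [coeff_eq_zero, zero_smul] at apply_eq_smul

end Semilinear

theorem hankel_trivial_kernel_iff_general (hS : IsForwardShift_s2 b S) (hT : IsBackwardShift b T)
    {H : E →L⋆[𝕜] E} (hH : Semiconj H S T) :
    H.ker = ⊥ ↔ b 0 ∈ closure (Set.range H) ∧ b 0 ∉ Set.range H := by
  have : CompleteSpace E := b.repr.toIsometryEquiv.completeSpace
  rw [closure_range_eq_orthogonal_ker_of_inner_apply_comm (inner_apply_comm_of_semiconj hS hT hH)]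
  constructor
  · intro hker
    exact ⟨by simp [hker], basis_zero_notMem_range_of_semiconj hS hT hH hker⟩
  · rintro ⟨hperp, hrange⟩
    have repr_zero_eq_zero (x : E) (hx : x ∈ H.ker) : b.repr x 0 = 0 := by
      rw [b.repr_apply_apply]
      exact Submodule.inner_left_of_mem_orthogonal hx hperp
    have ker_invariant := mapsTo_ker_of_semiconj hS hT hH hrange repr_zero_eq_zero
    exact (Submodule.eq_bot_iff _).2 fun x ↦ hT.eq_zero_of_mapsTo ker_invariant repr_zero_eq_zero

end Shift

section StandardBasis

variable {𝕜 : Type*} [RCLike 𝕜]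

/-- The standard basis of `ℓ²(ℕ, 𝕜)`; coordinates with respect to it are the terms of the
sequence. -/
noncomputable def stdHilbertBasis (𝕜 : Type*) [RCLike 𝕜] :
    HilbertBasis ℕ 𝕜 (lp (fun _ : ℕ => 𝕜) 2) :=
  .ofRepr (.refl 𝕜 _)

theorem stdHilbertBasis_repr_star (x : lp (fun _ : ℕ => 𝕜) 2) (n : ℕ) :
    (stdHilbertBasis 𝕜).repr (star x) n = star ((stdHilbertBasis 𝕜).repr x n) :=
  rfl

theorem eq_stdHilbertBasis_zero {e : lp (fun _ : ℕ => 𝕜) 2} (h_zero : e 0 = 1)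
    (h_ne : ∀ n : ℕ, n ≠ 0 → e n = 0) : e = stdHilbertBasis 𝕜 0 := by
  refine eq_of_hilbertBasis_repr_eq (stdHilbertBasis 𝕜) fun n ↦ ?_
  rw [HilbertBasis.repr_self]
  cases n with
  | zero => exact h_zero.trans (by simp)
  | succ n => exact (h_ne (n + 1) n.succ_ne_zero).trans (by simp)

theorem IsForwardShift_s2.star_commute {S : lp (fun _ : ℕ => 𝕜) 2 → lp (fun _ : ℕ => 𝕜) 2}
    (hS : IsForwardShift_s2 (stdHilbertBasis 𝕜) S) : Function.Commute star S := by
  intro x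
  refine eq_of_hilbertBasis_repr_eq (stdHilbertBasis 𝕜) fun n ↦ ?_
  cases n with
  | zero => rw [stdHilbertBasis_repr_star, hS.repr_zero, hS.repr_zero, star_zero]
  | succ n => rw [stdHilbertBasis_repr_star, hS.repr_succ, hS.repr_succ, stdHilbertBasis_repr_star]

end StandardBasis

/-- **Triviality of the kernel of a Hankel operator.** For a bounded Hankel operator `Γ` on
`ℓ²(ℕ, ℂ)` with associated anti-linear Hankel operator `H = Γ∘C`, the kernel of `H` is
trivial if and only if `e₀` belongs to the closure of the range of `H` but not to the
range of `H` itself. -/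
theorem hankel_trivial_kernel_iff
    (S Sstar Γ : lp (fun _ : ℕ => ℂ) 2 →L[ℂ] lp (fun _ : ℕ => ℂ) 2)
    (hS0 : ∀ x : lp (fun _ : ℕ => ℂ) 2, S x 0 = 0)
    (hSsucc : ∀ (x : lp (fun _ : ℕ => ℂ) 2) (n : ℕ), S x (n + 1) = x n)
    (hSstar : ∀ (x : lp (fun _ : ℕ => ℂ) 2) (n : ℕ), Sstar x n = x (n + 1))
    (hHankel : ∀ x : lp (fun _ : ℕ => ℂ) 2, Γ (S x) = Sstar (Γ x))
    (C : lp (fun _ : ℕ => ℂ) 2 → lp (fun _ : ℕ => ℂ) 2)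
    (hC : ∀ (x : lp (fun _ : ℕ => ℂ) 2) (n : ℕ), C x n = conj (x n))
    (H : lp (fun _ : ℕ => ℂ) 2 → lp (fun _ : ℕ => ℂ) 2)
    (hH : ∀ x, H x = Γ (C x))
    (e0 : lp (fun _ : ℕ => ℂ) 2) (he0 : e0 0 = 1) (he0' : ∀ n : ℕ, n ≠ 0 → e0 n = 0) :
    (∀ x : lp (fun _ : ℕ => ℂ) 2, H x = 0 → x = 0) ↔
      (e0 ∈ closure (Set.range H) ∧ e0 ∉ Set.range H) := by
  have hS : IsForwardShift_s2 (stdHilbertBasis ℂ) S := ⟨hS0, hSsucc⟩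
  have C_eq_star : C = star := funext fun x ↦ lp.ext (funext (hC x))
  obtain rfl : H = Γ.comp (starL ℂ).toContinuousLinearMap :=
    funext fun x ↦ by rw [hH, C_eq_star]; rfl
  rw [eq_stdHilbertBasis_zero he0 he0', ← hankel_trivial_kernel_iff_general hS hSstar
    (Semiconj.comp_left (fbc := Γ) hHankel hS.star_commute), LinearMap.ker_eq_bot']
  rfl
end

section
/- Let Γ be a Hankel operator on ℓ²(ℕ, ℂ) and let H := Γ∘C be the associated anti-linear Hankel operator. Then the kernel of H is either the zero subspace or an infinite-dimensional subspace: if Ker H ≠ {0}, then Ker H is infinite-dimensional. -/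
open scoped ComplexConjugate InnerProductSpace

/-!
Encode a sequence by its generating power series: the forward shift becomes multiplication by `X`.
If `φ ≠ 0`, the series `Xⁿ φ` are linearly independent, because the powers of `X` are and power
series over a domain form a domain. So the orbit of a nonzero vector under the forward shift spans
an infinite-dimensional space. The Hankel identity `H ∘ S = S* ∘ H` keeps the whole orbit of a
kernel vector inside the kernel.
-/

open Function
open scoped PowerSeries

theorem linearIndependent_powerSeries_X_pow {R : Type*} [CommSemiring R] :
    LinearIndependent R fun n : ℕ => (PowerSeries.X : R⟦X⟧) ^ n := by
  let toSeries : Polynomial R →ₗ[R] R⟦X⟧ := (Polynomial.coeToPowerSeries.algHom R).toLinearMap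
  have toSeries_injective : Injective toSeries := fun p q hpq =>
    Polynomial.coe_injective R <| by simpa [toSeries] using hpq
  have toSeries_basis : toSeries ∘ Polynomial.basisMonomials R = fun n => PowerSeries.X ^ n := by
    ext1 n
    simp [toSeries, Polynomial.monomial_one_right_eq_X_pow]
  rw [← toSeries_basis]
  exact (Polynomial.basisMonomials R).linearIndependent.map_injOn toSeries toSeries_injective.injOn

theorem linearIndependent_powerSeries_X_pow_mul {R : Type*} [CommRing R] [IsDomain R]
    {φ : R⟦X⟧} (hφ : φ ≠ 0) : LinearIndependent R fun n : ℕ => PowerSeries.X ^ n * φ :=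
  linearIndependent_powerSeries_X_pow.map_injOn (LinearMap.mulRight R φ)
    (mul_left_injective₀ hφ).injOn

/-- The generating power series `∑ aₙ Xⁿ` of a sequence `a`, as a linear map; it turns the forward
shift into multiplication by `X`. -/
def generatingSeries (R : Type*) [Semiring R] : (ℕ → R) →ₗ[R] R⟦X⟧ where
  toFun := PowerSeries.mk
  map_add' _ _ := by ext; simp
  map_smul' _ _ := by ext; simp

theorem coeff_generatingSeries {R : Type*} [Semiring R] (a : ℕ → R) (n : ℕ) :
    PowerSeries.coeff n (generatingSeries R a) = a n :=
  PowerSeries.coeff_mk n a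

theorem generatingSeries_injective {R : Type*} [Semiring R] : Injective (generatingSeries R) :=
  fun a b hab => funext fun n => by
    rw [← coeff_generatingSeries a, hab, coeff_generatingSeries]

/-- `S` is the forward shift `(x₀, x₁, …) ↦ (0, x₀, x₁, …)` on a space `V` of sequences, the
sequence underlying `v : V` being `coord v`. -/
structure IsForwardShift_s3 {V R : Type*} [Zero R] (coord : V → ℕ → R) (S : V → V) : Prop where
  coord_zero : ∀ v, coord (S v) 0 = 0
  coord_succ : ∀ v n, coord (S v) (n + 1) = coord v n

namespace IsForwardShift_s3

theorem commute_of_coordwise {V R : Type*} [Zero R] {coord : V → ℕ → R} {S : V → V}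
    (hS : IsForwardShift_s3 coord S) (coord_injective : Injective coord) {σ : R → R} (hσ : σ 0 = 0)
    {C : V → V} (hC : ∀ v n, coord (C v) n = σ (coord v n)) : Function.Commute C S := fun v =>
  coord_injective <| funext fun
    | 0 => by rw [hC, hS.coord_zero, hS.coord_zero, hσ]
    | n + 1 => by rw [hC, hS.coord_succ, hS.coord_succ, hC]

theorem semiconj_generatingSeries {V R : Type*} [Semiring R] {coord : V → ℕ → R} {S : V → V}
    (hS : IsForwardShift_s3 coord S) :
    Semiconj (fun v => generatingSeries R (coord v)) S (PowerSeries.X * ·) := fun v => by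
  ext n
  cases n with
  | zero => rw [coeff_generatingSeries, hS.coord_zero, PowerSeries.coeff_zero_X_mul]
  | succ n =>
    rw [coeff_generatingSeries, hS.coord_succ, PowerSeries.coeff_succ_X_mul, coeff_generatingSeries]

theorem generatingSeries_iterate {V R : Type*} [Semiring R] {coord : V → ℕ → R} {S : V → V}
    (hS : IsForwardShift_s3 coord S) (v : V) (n : ℕ) :
    generatingSeries R (coord (S^[n] v)) = PowerSeries.X ^ n * generatingSeries R (coord v) := by
  simpa only [mul_left_iterate] using hS.semiconj_generatingSeries.iterate_right n v

theorem linearIndependent_iterate {R V : Type*} [CommRing R] [IsDomain R] [AddCommMonoid V]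
    [Module R V] {coord : V →ₗ[R] ℕ → R} {S : V → V} (hS : IsForwardShift_s3 coord S) {v : V}
    (hv : coord v ≠ 0) : LinearIndependent R fun n : ℕ => S^[n] v := by
  have series_ne_zero : generatingSeries R (coord v) ≠ 0 :=
    (map_ne_zero_iff _ generatingSeries_injective).mpr hv
  refine LinearIndependent.of_comp (generatingSeries R ∘ₗ coord) ?_
  have series_iterate : (generatingSeries R ∘ₗ coord) ∘ (fun n => S^[n] v) =
      fun n => PowerSeries.X ^ n * generatingSeries R (coord v) :=
    funext (hS.generatingSeries_iterate v)
  rw [series_iterate]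
  exact linearIndependent_powerSeries_X_pow_mul series_ne_zero

end IsForwardShift_s3

theorem hankel_kernel_trivial_or_infiniteDimensional_general {R V W : Type*} [CommRing R]
    [IsDomain R] [AddCommMonoid V] [Module R V] [Zero W] {coord : V →ₗ[R] ℕ → R}
    (coord_injective : Injective coord) {S : V → V} (hS : IsForwardShift_s3 coord S)
    {T : W → W} (hT : T 0 = 0) {H : V → W} (hH : Semiconj H S T) (hker : ∃ v, v ≠ 0 ∧ H v = 0) :
    ∃ f : ℕ → V, LinearIndependent R f ∧ ∀ n : ℕ, H (f n) = 0 := by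
  obtain ⟨v, hv, hHv⟩ := hker
  have coord_ne_zero : coord v ≠ 0 := (map_ne_zero_iff coord coord_injective).mpr hv
  refine ⟨fun n => S^[n] v, hS.linearIndependent_iterate coord_ne_zero, fun n => ?_⟩
  calc H (S^[n] v) = T^[n] (H v) := hH.iterate_right n v
    _ = T^[n] 0 := by rw [hHv]
    _ = 0 := iterate_fixed hT n

/-- **Dichotomy for the kernel of a Hankel operator.** For a bounded Hankel operator `Γ` on
`ℓ²(ℕ, ℂ)` with associated anti-linear Hankel operator `H = Γ∘C`, if the kernel of `H` is
nontrivial then it is infinite-dimensional: it contains an infinite linearly independent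
family. -/
theorem hankel_kernel_trivial_or_infiniteDimensional
    (S Sstar Γ : lp (fun _ : ℕ => ℂ) 2 →L[ℂ] lp (fun _ : ℕ => ℂ) 2)
    (hS0 : ∀ x : lp (fun _ : ℕ => ℂ) 2, S x 0 = 0)
    (hSsucc : ∀ (x : lp (fun _ : ℕ => ℂ) 2) (n : ℕ), S x (n + 1) = x n)
    (hSstar : ∀ (x : lp (fun _ : ℕ => ℂ) 2) (n : ℕ), Sstar x n = x (n + 1))
    (hHankel : ∀ x : lp (fun _ : ℕ => ℂ) 2, Γ (S x) = Sstar (Γ x))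
    (C : lp (fun _ : ℕ => ℂ) 2 → lp (fun _ : ℕ => ℂ) 2)
    (hC : ∀ (x : lp (fun _ : ℕ => ℂ) 2) (n : ℕ), C x n = conj (x n))
    (H : lp (fun _ : ℕ => ℂ) 2 → lp (fun _ : ℕ => ℂ) 2)
    (hH : ∀ x, H x = Γ (C x))
    (hker : ∃ x : lp (fun _ : ℕ => ℂ) 2, x ≠ 0 ∧ H x = 0) :
    ∃ f : ℕ → lp (fun _ : ℕ => ℂ) 2,
      LinearIndependent ℂ f ∧ ∀ n : ℕ, H (f n) = 0 := by
  let coord : lp (fun _ : ℕ => ℂ) 2 →ₗ[ℂ] ℕ → ℂ := LinearMap.pi (lp.evalₗ _ 2)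
  have coord_injective : Injective coord := fun _ _ hxy => lp.ext hxy
  have hS : IsForwardShift_s3 coord S := ⟨hS0, hSsucc⟩
  have hCS : Function.Commute C S := hS.commute_of_coordwise coord_injective (map_zero conj) hC
  have hHS : Semiconj H S Sstar := funext hH ▸ Semiconj.comp_left hHankel hCS
  exact hankel_kernel_trivial_or_infiniteDimensional_general coord_injective hS (map_zero Sstar)
    hHS hker
end

section
/- Let A, B, K be bounded linear operators on a complex Hilbert space X satisfying K∘A = B∘K, with ‖B‖ ≤ 1, with the range of K dense in X, and with A asymptotically stable (Aⁿ x → 0 for every x ∈ X). Then B is asymptotically stable: Bⁿ x → 0 for every x ∈ X. -/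
open Filter

/-!
The intertwining relation iterates to `K Aⁿ = Bⁿ K`, so `Bⁿ → 0` pointwise on the range of `K`.
A power-bounded `B` has equicontinuous powers, and for an equicontinuous family the set of points
of convergence to `0` is closed; containing the dense range of `K`, it is the whole space.
-/

theorem tendsto_iterate_of_semiconj {X Y : Type*} [TopologicalSpace X] [UniformSpace Y]
    {f : X → X} {g : Y → Y} {k : X → Y} {a : X} (hsemi : Function.Semiconj k f g)
    (hk : DenseRange k) (hka : ContinuousAt k a) (hg : Equicontinuous fun n : ℕ => g^[n])
    (hf : ∀ x, Tendsto (fun n : ℕ => f^[n] x) atTop (nhds a)) (y : Y) :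
    Tendsto (fun n : ℕ => g^[n] y) atTop (nhds (k a)) := by
  have tendsto_on_range (x : X) : Tendsto (fun n : ℕ => g^[n] (k x)) atTop (nhds (k a)) :=
    (hka.tendsto.comp (hf x)).congr fun n => (hsemi.iterate_right n).eq x
  exact hk.induction_on y (hg.isClosed_setOfPred_tendsto continuous_const) tendsto_on_range

section Operators

variable {𝕜 Y : Type*} [NontriviallyNormedField 𝕜] [SeminormedAddCommGroup Y]
  [NormedSpace 𝕜 Y]

theorem equicontinuous_iterate_of_exists_norm_pow_le {T : Y →L[𝕜] Y}
    (hT : ∃ C, ∀ n : ℕ, ‖T ^ n‖ ≤ C) : Equicontinuous fun n : ℕ => T^[n] := by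
  have bounded_iff_equicontinuous :
      (∃ C, ∀ n : ℕ, ‖T ^ n‖ ≤ C) ↔ Equicontinuous fun n : ℕ => ⇑(T ^ n) :=
    (NormedSpace.equicontinuous_TFAE fun n : ℕ => T ^ n).out 5 1
  simpa only [FunLike.coe_pow_eq_iterate] using bounded_iff_equicontinuous.mp hT

theorem opNorm_pow_le_one {T : Y →L[𝕜] Y} (hT : ‖T‖ ≤ 1) (n : ℕ) : ‖T ^ n‖ ≤ 1 := by
  rcases n.eq_zero_or_pos with rfl | hn
  · exact ContinuousLinearMap.norm_id_le
  · exact (norm_pow_le' T hn).trans (pow_le_one₀ (norm_nonneg T) hT)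

theorem asymptotically_stable_of_intertwined_general
    {X : Type*} [AddCommMonoid X] [TopologicalSpace X] [Module 𝕜 X]
    (A : X →L[𝕜] X) (B : Y →L[𝕜] Y) (K : X →L[𝕜] Y)
    (hKA : K.comp A = B.comp K)
    (hB : ∃ C, ∀ n : ℕ, ‖B ^ n‖ ≤ C)
    (hK : DenseRange K)
    (hA : ∀ x : X, Tendsto (fun n : ℕ => (A ^ n) x) atTop (nhds 0)) :
    ∀ y : Y, Tendsto (fun n : ℕ => (B ^ n) y) atTop (nhds 0) := by
  have hsemi : Function.Semiconj K A B := DFunLike.congr_fun hKA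
  simp only [FunLike.coe_pow_eq_iterate] at hA ⊢
  simpa only [map_zero] using tendsto_iterate_of_semiconj hsemi hK K.continuous.continuousAt
    (equicontinuous_iterate_of_exists_norm_pow_le hB) hA

end Operators

/-- **Transfer of asymptotic stability through an intertwiner with dense range.**
If `K∘A = B∘K` with `‖B‖ ≤ 1`, `K` has dense range, and `A` is asymptotically stable
(`Aⁿx → 0` for all `x`), then `B` is asymptotically stable. -/
theorem asymptotically_stable_of_intertwined
    {X : Type*} [NormedAddCommGroup X] [InnerProductSpace ℂ X] [CompleteSpace X]
    (A B K : X →L[ℂ] X)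
    (hKA : K.comp A = B.comp K)
    (hB : ‖B‖ ≤ 1)
    (hK : DenseRange K)
    (hA : ∀ x : X, Tendsto (fun n : ℕ => (A ^ n) x) atTop (nhds 0)) :
    ∀ x : X, Tendsto (fun n : ℕ => (B ^ n) x) atTop (nhds 0) := by
  exact asymptotically_stable_of_intertwined_general A B K hKA ⟨1, opNorm_pow_le_one hB⟩ hK hA
end

section
/- Let ρ, M, M̃ be as in the model context. Then there exists a unique bounded linear operator Q on L²(ρ) satisfying Q∘M^{1/2} = M̃^{1/2}, where M^{1/2} and M̃^{1/2} denote the positive square roots of M and M̃; Q is a contraction (‖Q‖ ≤ 1); the positive self-adjoint contraction 𝔖₀ := Q*∘Q does not have 1 as an eigenvalue (Ker(𝔖₀ − I) = {0}); and 𝔖₀ is asymptotically stable: (𝔖₀)ⁿ x → 0 for every x ∈ L²(ρ). -/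
open MeasureTheory Filter
open scoped InnerProductSpace ENNReal

/-!
Write `R = M^{1/2}`, `T = M̃^{1/2}`, `A = R²` and `e = 𝟙`. Operator monotonicity of the square
root turns `T⁴ = A² - ⟨·, e⟩e ≤ A²` into `T² ≤ A`, that is `‖T x‖ ≤ ‖R x‖`, and this yields the
contraction `Q`. Put `S = Q*Q`. Then `R S R = T²`, so cancelling one factor `R` on each side of
`T⁴ = A² - ⟨·, e⟩e` leaves `A - S A S = ⟨·, v⟩v` with `R v = e`. Testing this identity on a fixed
vector `x` of `S` gives `⟨x, v⟩ = 0`, and then `A x` is fixed as well. Hence `x` is orthogonal to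
every `Aⁿ v`, so `R x` is orthogonal to every `Aⁿ e`; as polynomials are dense in `L²(ρ)`, `e` is
cyclic for `A` and `x = 0`. Finally, `⟨x, Sⁿ x⟩` decreases in `n` because `0 ≤ S ≤ 1`, which forces
`Sⁿ x` to converge, necessarily to a fixed vector of `S`.
-/

open scoped Topology
open ContinuousLinearMap (adjoint)
open InnerProductSpace (rankOne)
open RCLike (re)

section SelfAdjoint

variable {𝕜 E : Type*} [RCLike 𝕜] [NormedAddCommGroup E] [InnerProductSpace 𝕜 E] [CompleteSpace E]
  {A B S : E →L[𝕜] E} {e v x : E}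

theorem inner_apply_left_eq_inner_apply_right (hS : IsSelfAdjoint S) (x y : E) :
    ⟪S x, y⟫_𝕜 = ⟪x, S y⟫_𝕜 :=
  hS.isSymmetric x y

theorem inner_pow_apply_pow_apply (hS : IsSelfAdjoint S) (m n : ℕ) (x y : E) :
    ⟪(S ^ m) x, (S ^ n) y⟫_𝕜 = ⟪x, (S ^ (m + n)) y⟫_𝕜 := by
  rw [pow_add, inner_apply_left_eq_inner_apply_right (hS.pow m), mul_apply_eq_comp]

theorem norm_pow_apply_sub_pow_apply_sq (hS : IsSelfAdjoint S) (m n : ℕ) (x : E) :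
    ‖(S ^ m) x - (S ^ n) x‖ ^ 2 =
      re ⟪x, (S ^ (m + m)) x⟫_𝕜 - 2 * re ⟪x, (S ^ (m + n)) x⟫_𝕜 + re ⟪x, (S ^ (n + n)) x⟫_𝕜 := by
  simp only [← inner_pow_apply_pow_apply hS, inner_self_eq_norm_sq]
  exact norm_sub_sq _ _

theorem cauchySeq_pow_apply_of_tendsto_inner (hS : IsSelfAdjoint S) {l : ℝ}
    (hl : Tendsto (fun n : ℕ => re ⟪x, (S ^ n) x⟫_𝕜) atTop (𝓝 l)) :
    CauchySeq fun n : ℕ => (S ^ n) x := by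
  have hfst : Tendsto Prod.fst (atTop : Filter (ℕ × ℕ)) atTop :=
    prod_atTop_atTop_eq (α := ℕ) (β := ℕ) ▸ tendsto_fst
  have hsnd : Tendsto Prod.snd (atTop : Filter (ℕ × ℕ)) atTop :=
    prod_atTop_atTop_eq (α := ℕ) (β := ℕ) ▸ tendsto_snd
  have hsq : Tendsto (fun p : ℕ × ℕ => ‖(S ^ p.1) x - (S ^ p.2) x‖ ^ 2) atTop (𝓝 0) := by
    simp only [norm_pow_apply_sub_pow_apply_sq hS]
    have hlim := ((hl.comp (hfst.atTop_add_atTop hfst)).sub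
      ((hl.comp (hfst.atTop_add_atTop hsnd)).const_mul 2)).add
      (hl.comp (hsnd.atTop_add_atTop hsnd))
    rwa [show l - 2 * l + l = 0 by ring] at hlim
  rw [cauchySeq_iff_tendsto_dist_atTop_0]
  simpa [dist_eq_norm, Real.sqrt_sq] using hsq.sqrt

theorem denseRange_of_isSelfAdjoint_of_injective (hS : IsSelfAdjoint S)
    (hinj : Function.Injective S) : DenseRange S := by
  have horth : S.rangeᗮ = ⊥ := by
    rw [S.orthogonal_range, hS.adjoint_eq]
    exact LinearMap.ker_eq_bot.2 hinj
  exact Submodule.dense_iff_topologicalClosure_eq_top.2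
    (Submodule.topologicalClosure_eq_top_iff.2 horth)

theorem norm_inner_le_norm_apply_of_mul_self_eq_sub_rankOne (hA : IsSelfAdjoint A)
    (hB : IsSelfAdjoint B) (hBA : B * B = A * A - rankOne 𝕜 e e) (x : E) :
    ‖⟪e, x⟫_𝕜‖ ≤ ‖A x‖ := by
  have hsq : ‖B x‖ ^ 2 = ‖A x‖ ^ 2 - ‖⟪e, x⟫_𝕜‖ ^ 2 := by
    have hinner : ⟪x, B (B x)⟫_𝕜 = ⟪x, A (A x)⟫_𝕜 - ⟪e, x⟫_𝕜 * ⟪x, e⟫_𝕜 := by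
      have happly := congr($hBA x)
      simp only [mul_apply_eq_comp, sub_apply,
        InnerProductSpace.rankOne_apply] at happly
      rw [happly, inner_sub_right, inner_smul_right]
    rw [← inner_apply_left_eq_inner_apply_right hB, ← inner_apply_left_eq_inner_apply_right hA,
      ← inner_conj_symm x e, RCLike.mul_conj, inner_self_eq_norm_sq_to_K,
      inner_self_eq_norm_sq_to_K] at hinner
    exact_mod_cast hinner
  exact le_of_sq_le_sq (by linarith [sq_nonneg ‖B x‖]) (norm_nonneg _)

theorem inner_eq_zero_and_map_apply_eq_of_sub_eq_rankOne (hS : IsSelfAdjoint S)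
    (hA : A - S * A * S = rankOne 𝕜 v v) (hx : S x = x) :
    ⟪v, x⟫_𝕜 = 0 ∧ S (A x) = A x := by
  have happly : A x - S (A x) = ⟪v, x⟫_𝕜 • v := by
    simpa [hx] using congr($hA x)
  have hvx : ⟪v, x⟫_𝕜 = 0 := by
    have hsymm : ⟪x, S (A x)⟫_𝕜 = ⟪x, A x⟫_𝕜 := by
      rw [← inner_apply_left_eq_inner_apply_right hS, hx]
    have hinner : ⟪v, x⟫_𝕜 * ⟪x, v⟫_𝕜 = 0 := by
      rw [← inner_smul_right, ← happly, inner_sub_right, hsymm, sub_self]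
    exact (mul_eq_zero.1 hinner).elim id inner_eq_zero_symm.1
  refine ⟨hvx, ?_⟩
  rw [hvx, zero_smul, sub_eq_zero] at happly
  exact happly.symm

theorem inner_pow_apply_eq_zero_of_sub_eq_rankOne (hS : IsSelfAdjoint S)
    (hA : A - S * A * S = rankOne 𝕜 v v) (hx : S x = x) (n : ℕ) :
    ⟪v, (A ^ n) x⟫_𝕜 = 0 := by
  have hfixed : S ((A ^ n) x) = (A ^ n) x := by
    induction n with
    | zero => simpa using hx
    | succ n ih =>
      rw [pow_succ']
      exact (inner_eq_zero_and_map_apply_eq_of_sub_eq_rankOne hS hA ih).2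
  exact (inner_eq_zero_and_map_apply_eq_of_sub_eq_rankOne hS hA hfixed).1

end SelfAdjoint

section PositiveContraction

variable {H : Type*} [NormedAddCommGroup H] [InnerProductSpace ℂ H] [CompleteSpace H]
  {S : H →L[ℂ] H}

theorem exists_tendsto_inner_pow_apply (hS₀ : 0 ≤ S) (hS₁ : S ≤ 1) (x : H) :
    ∃ l : ℝ, Tendsto (fun n : ℕ => re ⟪x, (S ^ n) x⟫_ℂ) atTop (𝓝 l) := by
  have hanti : Antitone fun n : ℕ => re ⟪x, (S ^ n) x⟫_ℂ := fun m n hmn => by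
    have hpos := ((ContinuousLinearMap.le_def _ _).1
      (CStarAlgebra.pow_antitone hS₀ hS₁ hmn)).re_inner_nonneg_right x
    simpa [inner_sub_right] using hpos
  have hnonneg (n : ℕ) : 0 ≤ re ⟪x, (S ^ n) x⟫_ℂ :=
    ((ContinuousLinearMap.nonneg_iff_isPositive _).1
      (CStarAlgebra.pow_nonneg hS₀ n)).re_inner_nonneg_right x
  exact ⟨_, tendsto_atTop_ciInf hanti ⟨0, Set.forall_mem_range.2 hnonneg⟩⟩

theorem tendsto_pow_apply_zero_of_forall_fixed_eq_zero (hS₀ : 0 ≤ S) (hS₁ : S ≤ 1)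
    (hfix : ∀ x, S x = x → x = 0) (x : H) :
    Tendsto (fun n : ℕ => (S ^ n) x) atTop (𝓝 0) := by
  obtain ⟨l, hl⟩ := exists_tendsto_inner_pow_apply hS₀ hS₁ x
  obtain ⟨y, hy⟩ := cauchySeq_tendsto_of_complete
    (cauchySeq_pow_apply_of_tendsto_inner (.of_nonneg hS₀) hl)
  have hSy : S y = y := by
    simp only [FunLike.coe_pow_eq_iterate] at hy
    exact isFixedPt_of_tendsto_iterate hy S.continuous.continuousAt
  rwa [hfix y hSy] at hy

end PositiveContraction

section Factorization

section Normed

variable {𝕜 E F G : Type*} [NontriviallyNormedField 𝕜]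
  [SeminormedAddCommGroup E] [NormedSpace 𝕜 E] [SeminormedAddCommGroup F] [NormedSpace 𝕜 F]
  [NormedAddCommGroup G] [NormedSpace 𝕜 G] {R : E →L[𝕜] F} {T : E →L[𝕜] G}

theorem existsUnique_comp_eq_of_norm_le [CompleteSpace G] (hR : DenseRange R) {C : ℝ}
    (hTR : ∀ x, ‖T x‖ ≤ C * ‖R x‖) : ∃! Q : F →L[𝕜] G, Q ∘L R = T := by
  refine ⟨T.toLinearMap.extendOfNorm R.toLinearMap, ?_, fun Q hQ => ?_⟩
  · ext x
    exact LinearMap.extendOfNorm_eq (f := T.toLinearMap) (e := R.toLinearMap) hR ⟨C, hTR⟩ x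
  · exact (LinearMap.extendOfNorm_unique (f := T.toLinearMap) (e := R.toLinearMap) hR C hTR Q
      congr(($hQ).toLinearMap)).symm

theorem opNorm_le_of_comp_eq_of_norm_le (hR : DenseRange R) {C : ℝ} (hC : 0 ≤ C)
    (hTR : ∀ x, ‖T x‖ ≤ C * ‖R x‖) {Q : F →L[𝕜] G} (hQ : Q ∘L R = T) : ‖Q‖ ≤ C := by
  refine Q.opNorm_le_bound hC fun y => hR.induction_on y
    (isClosed_le (by fun_prop) (by fun_prop)) fun x => ?_
  rw [← ContinuousLinearMap.comp_apply, hQ]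
  exact hTR x

end Normed

variable {𝕜 E F G : Type*} [RCLike 𝕜]
  [NormedAddCommGroup E] [InnerProductSpace 𝕜 E] [CompleteSpace E]
  [NormedAddCommGroup F] [InnerProductSpace 𝕜 F] [CompleteSpace F]
  [NormedAddCommGroup G] [InnerProductSpace 𝕜 G] [CompleteSpace G]
  {R : E →L[𝕜] F} {T : E →L[𝕜] G}

theorem adjoint_comp_self_le_adjoint_comp_self_iff :
    adjoint T ∘L T ≤ adjoint R ∘L R ↔ ∀ x, ‖T x‖ ≤ ‖R x‖ := by
  have hself : IsSelfAdjoint (adjoint R ∘L R - adjoint T ∘L T) :=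
    R.isPositive_adjoint_comp_self.isSelfAdjoint.sub T.isPositive_adjoint_comp_self.isSelfAdjoint
  have hform (x : E) :
      (adjoint R ∘L R - adjoint T ∘L T).reApplyInnerSelf x = ‖R x‖ ^ 2 - ‖T x‖ ^ 2 := by
    rw [ContinuousLinearMap.reApplyInnerSelf_apply, sub_apply, inner_sub_left, map_sub,
      ← R.apply_norm_sq_eq_inner_adjoint_left, ← T.apply_norm_sq_eq_inner_adjoint_left]
  simp only [ContinuousLinearMap.le_def, ContinuousLinearMap.isPositive_def', hself, true_and,
    hform, sub_nonneg, sq_le_sq₀ (norm_nonneg _) (norm_nonneg _)]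

theorem adjoint_comp_self_le_one (hT : ‖T‖ ≤ 1) : adjoint T ∘L T ≤ 1 := by
  have hle := (adjoint_comp_self_le_adjoint_comp_self_iff (R := 1)).2 fun x =>
    T.le_of_opNorm_le_of_le hT le_rfl |>.trans_eq (one_mul ‖x‖)
  rwa [ContinuousLinearMap.one_def, ContinuousLinearMap.adjoint_id] at hle

theorem exists_eq_rankOne_of_adjoint_comp_comp_eq_rankOne {D : F →L[𝕜] F} {e : E}
    (hR : DenseRange R) (hD : adjoint R ∘L D ∘L R = rankOne 𝕜 e e) :
    ∃ v, adjoint R v = e ∧ D = rankOne 𝕜 v v := by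
  have hinj : Function.Injective (adjoint R) := by
    refine LinearMap.ker_eq_bot.1 ?_
    rw [← R.orthogonal_range]
    exact Submodule.topologicalClosure_eq_top_iff.1
      (Submodule.dense_iff_topologicalClosure_eq_top.1 hR)
  obtain ⟨v, hv⟩ : ∃ v, adjoint R v = e := by
    rcases eq_or_ne e 0 with rfl | he
    · exact ⟨0, map_zero _⟩
    · refine ⟨(⟪e, e⟫_𝕜)⁻¹ • D (R e), ?_⟩
      rw [map_smul, show adjoint R (D (R e)) = ⟪e, e⟫_𝕜 • e from congr($hD e),
        inv_smul_smul₀ (inner_self_ne_zero.2 he)]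
  refine ⟨v, hv, ?_⟩
  have hcomp : D ∘L R = rankOne 𝕜 v v ∘L R := by
    refine ContinuousLinearMap.cancel_left hinj ?_
    rw [hD, InnerProductSpace.rankOne_comp, InnerProductSpace.comp_rankOne, hv]
  exact DFunLike.coe_injective (hR.equalizer D.continuous (rankOne 𝕜 v v).continuous
    (funext fun x => congr($hcomp x)))

end Factorization

section CyclicVector

variable {𝕜 E : Type*} [RCLike 𝕜] [NormedAddCommGroup E] [InnerProductSpace 𝕜 E]

/-- The vector `e` is cyclic for the operator `A`: the orbit `e, A e, A² e, …` spans a dense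
subspace. -/
def IsCyclicVector (A : E →L[𝕜] E) (e : E) : Prop :=
  (Submodule.span 𝕜 (Set.range fun n : ℕ => (A ^ n) e)).topologicalClosure = ⊤

variable [CompleteSpace E] {A : E →L[𝕜] E} {e : E}

theorem isCyclicVector_iff_forall_inner_eq_zero :
    IsCyclicVector A e ↔ ∀ x, (∀ n : ℕ, ⟪(A ^ n) e, x⟫_𝕜 = 0) → x = 0 := by
  have hmem (x : E) : x ∈ (Submodule.span 𝕜 (Set.range fun n : ℕ => (A ^ n) e))ᗮ ↔
      ∀ n : ℕ, ⟪(A ^ n) e, x⟫_𝕜 = 0 := by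
    rw [← Submodule.span_singleton_le_iff_mem, ← Submodule.isOrtho_iff_le,
      Submodule.isOrtho_comm, Submodule.isOrtho_span]
    simp
  simp only [IsCyclicVector, Submodule.topologicalClosure_eq_top_iff, Submodule.eq_bot_iff, hmem]

theorem IsCyclicVector.injective_of_norm_inner_le (he : IsCyclicVector A e)
    (hA : IsSelfAdjoint A) (hle : ∀ x, ‖⟪e, x⟫_𝕜‖ ≤ ‖A x‖) : Function.Injective A := by
  refine (injective_iff_map_eq_zero A).2 fun x hx =>
    isCyclicVector_iff_forall_inner_eq_zero.1 he x fun n => ?_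
  rw [inner_apply_left_eq_inner_apply_right (hA.pow n)]
  cases n with
  | zero => simpa [hx] using hle x
  | succ n => simp [pow_succ, hx]

end CyclicVector

section Moments

theorem integrable_continuous_smul_of_ae_mem_isCompact {X F : Type*} [TopologicalSpace X]
    [MeasurableSpace X] [OpensMeasurableSpace X] [NormedAddCommGroup F] [NormedSpace ℝ F]
    {μ : Measure X} {K : Set X} (hK : IsCompact K)
    (hμ : ∀ᵐ x ∂μ, x ∈ K) {f : X → F} (hf : Integrable f μ) {φ : X → ℝ} (hφ : Continuous φ) :
    Integrable (fun x => φ x • f x) μ := by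
  obtain ⟨C, hC⟩ := hK.exists_bound_of_continuousOn hφ.continuousOn
  exact hf.bdd_smul C hφ.aestronglyMeasurable (hμ.mono hC)

variable {F : Type*} [NormedAddCommGroup F] [NormedSpace ℝ F] {μ : Measure ℝ} {a b : ℝ}
  {f : ℝ → F}

theorem integral_polynomial_smul_eq_zero (hμ : ∀ᵐ s ∂μ, s ∈ Set.Icc a b) (hf : Integrable f μ)
    (hmom : ∀ n : ℕ, ∫ s, s ^ n • f s ∂μ = 0) (p : Polynomial ℝ) :
    ∫ s, p.eval s • f s ∂μ = 0 := by
  have hint (n : ℕ) : Integrable (fun s => s ^ n • f s) μ :=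
    integrable_continuous_smul_of_ae_mem_isCompact isCompact_Icc hμ hf (continuous_pow n)
  simp only [Polynomial.eval_eq_sum_range, Finset.sum_smul, mul_smul]
  rw [integral_finsetSum _ fun n _ => (hint n).fun_smul (p.coeff n)]
  simp only [integral_smul, hmom, smul_zero, Finset.sum_const_zero]

theorem integral_continuous_smul_eq_zero (hμ : ∀ᵐ s ∂μ, s ∈ Set.Icc a b) (hf : Integrable f μ)
    (hmom : ∀ n : ℕ, ∫ s, s ^ n • f s ∂μ = 0) {φ : ℝ → ℝ} (hφ : Continuous φ) :
    ∫ s, φ s • f s ∂μ = 0 := by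
  have hbound (ε : ℝ) (hε : 0 < ε) : ‖∫ s, φ s • f s ∂μ‖ ≤ ε * ∫ s, ‖f s‖ ∂μ := by
    obtain ⟨p, hp⟩ := exists_polynomial_near_of_continuousOn a b φ hφ.continuousOn ε hε
    have hdiff : ∫ s, φ s • f s ∂μ = ∫ s, (φ s • f s - p.eval s • f s) ∂μ := by
      rw [integral_sub (integrable_continuous_smul_of_ae_mem_isCompact isCompact_Icc hμ hf hφ)
        (integrable_continuous_smul_of_ae_mem_isCompact isCompact_Icc hμ hf p.continuous),
        integral_polynomial_smul_eq_zero hμ hf hmom, sub_zero]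
    rw [hdiff, ← integral_const_mul]
    refine norm_integral_le_of_norm_le (hf.norm.const_mul ε) (hμ.mono fun s hs => ?_)
    rw [← sub_smul, norm_smul, Real.norm_eq_abs, abs_sub_comm]
    gcongr
    exact (hp s hs).le
  have hlim : Tendsto (fun ε => ε * ∫ s, ‖f s‖ ∂μ) (𝓝[>] 0) (𝓝 0) :=
    ((continuous_mul_const _).tendsto' 0 0 (zero_mul _)).mono_left nhdsWithin_le_nhds
  exact norm_le_zero_iff.1 (ge_of_tendsto hlim (eventually_mem_nhdsWithin.mono hbound))

theorem ae_eq_zero_of_forall_integral_pow_smul_eq_zero [CompleteSpace F]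
    (hμ : ∀ᵐ s ∂μ, s ∈ Set.Icc a b) (hf : Integrable f μ)
    (hmom : ∀ n : ℕ, ∫ s, s ^ n • f s ∂μ = 0) : f =ᵐ[μ] 0 :=
  ae_eq_zero_of_integral_contDiff_smul_eq_zero hf.locallyIntegrable fun _ hφ _ =>
    integral_continuous_smul_eq_zero hμ hf hmom hφ.continuous

end Moments

section MultiplicationOperator

variable {𝕜 : Type*} [RCLike 𝕜] {ρ : Measure ℝ} {M : Lp 𝕜 2 ρ →L[𝕜] Lp 𝕜 2 ρ}

theorem coeFn_pow_apply_ae_eq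
    (hM : ∀ f : Lp 𝕜 2 ρ, ∀ᵐ s ∂ρ, (M f : ℝ → 𝕜) s = (s : 𝕜) * (f : ℝ → 𝕜) s)
    (f : Lp 𝕜 2 ρ) (n : ℕ) :
    ∀ᵐ s ∂ρ, ((M ^ n) f : ℝ → 𝕜) s = (s : 𝕜) ^ n * (f : ℝ → 𝕜) s := by
  induction n with
  | zero => simp
  | succ n ih =>
    filter_upwards [ih, hM ((M ^ n) f)] with s hn hsucc
    rw [pow_succ' M, mul_apply_eq_comp, hsucc, hn, pow_succ', mul_assoc]

theorem isCyclicVector_one_of_ae_mem_Icc [IsFiniteMeasure ρ] {a b : ℝ}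
    (hρ : ∀ᵐ s ∂ρ, s ∈ Set.Icc a b) {one : Lp 𝕜 2 ρ}
    (hone : ∀ᵐ s ∂ρ, (one : ℝ → 𝕜) s = 1)
    (hM : ∀ f : Lp 𝕜 2 ρ, ∀ᵐ s ∂ρ, (M f : ℝ → 𝕜) s = (s : 𝕜) * (f : ℝ → 𝕜) s) :
    IsCyclicVector M one := by
  refine isCyclicVector_iff_forall_inner_eq_zero.2 fun g hg => ?_
  have hmom (n : ℕ) : ∫ s, s ^ n • (g : ℝ → 𝕜) s ∂ρ = 0 := by
    rw [← hg n, L2.inner_def]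
    refine integral_congr_ae ?_
    filter_upwards [hone, coeFn_pow_apply_ae_eq hM one n] with s h_one h_pow
    rw [h_pow, h_one, mul_one, RCLike.inner_apply, map_pow, RCLike.conj_ofReal,
      RCLike.real_smul_eq_coe_mul, RCLike.ofReal_pow, mul_comm]
  exact (Lp.eq_zero_iff_ae_eq_zero).2 (ae_eq_zero_of_forall_integral_pow_smul_eq_zero hρ
    ((Lp.memLp g).integrable one_le_two) hmom)

end MultiplicationOperator

section Symmetrization

variable {H : Type*} [NormedAddCommGroup H] [InnerProductSpace ℂ H] [CompleteSpace H]
  {A B R T Q : H →L[ℂ] H} {e : H}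

theorem norm_apply_le_of_mul_self_mul_self_le (hR : IsSelfAdjoint R) (hT : IsSelfAdjoint T)
    (hTR : T * T * (T * T) ≤ R * R * (R * R)) (x : H) : ‖T x‖ ≤ ‖R x‖ := by
  have hsqrt := CFC.sqrt_le_sqrt _ _ hTR
  rw [CFC.sqrt_mul_self _ hT.mul_self_nonneg, CFC.sqrt_mul_self _ hR.mul_self_nonneg] at hsqrt
  refine adjoint_comp_self_le_adjoint_comp_self_iff.1 ?_ x
  rwa [hT.adjoint_eq, hR.adjoint_eq]

theorem exists_sub_eq_rankOne_of_comp_eq (hR : IsSelfAdjoint R) (hR_dense : DenseRange R)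
    (hT : IsSelfAdjoint T) (hTR : T * T * (T * T) = R * R * (R * R) - rankOne ℂ e e)
    (hQ : Q ∘L R = T) :
    ∃ v, R v = e ∧ R * R - (adjoint Q ∘L Q) * (R * R) * (adjoint Q ∘L Q) = rankOne ℂ v v := by
  set S : H →L[ℂ] H := adjoint Q ∘L Q
  have hRSR : R * S * R = T * T := by
    have hadj : T = R * adjoint Q := by
      rw [← hT.adjoint_eq, ← hQ, ContinuousLinearMap.adjoint_comp, hR.adjoint_eq]
      rfl
    calc R * S * R = (R * adjoint Q) * (Q ∘L R) := rfl
      _ = T * T := by rw [← hadj, hQ]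
  have hD : R * ((R * R - S * (R * R) * S) * R) = rankOne ℂ e e := by
    calc R * ((R * R - S * (R * R) * S) * R)
        = R * R * (R * R) - (R * S * R) * (R * S * R) := by noncomm_ring
      _ = rankOne ℂ e e := by rw [hRSR, hTR, sub_sub_cancel]
  obtain ⟨v, hv, hDv⟩ := exists_eq_rankOne_of_adjoint_comp_comp_eq_rankOne hR_dense
    (D := R * R - S * (R * R) * S) (by rw [hR.adjoint_eq]; exact hD)
  rw [hR.adjoint_eq] at hv
  exact ⟨v, hv, hDv⟩

theorem IsCyclicVector.injective_of_mul_self (he : IsCyclicVector (R * R) e)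
    (hR : IsSelfAdjoint R) (hT : IsSelfAdjoint T)
    (hTR : T * T * (T * T) = R * R * (R * R) - rankOne ℂ e e) : Function.Injective R := by
  have hRR : IsSelfAdjoint (R * R) := .of_nonneg hR.mul_self_nonneg
  have hTT : IsSelfAdjoint (T * T) := .of_nonneg hT.mul_self_nonneg
  have hinj : Function.Injective (R ∘ R) := he.injective_of_norm_inner_le hRR
    (norm_inner_le_norm_apply_of_mul_self_eq_sub_rankOne hRR hTT hTR)
  exact hinj.of_comp

theorem IsCyclicVector.eq_zero_of_adjoint_comp_self_apply_eq_self
    (he : IsCyclicVector (R * R) e) (hR : IsSelfAdjoint R) (hT : IsSelfAdjoint T)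
    (hTR : T * T * (T * T) = R * R * (R * R) - rankOne ℂ e e) (hQ : Q ∘L R = T) {x : H}
    (hx : (adjoint Q ∘L Q) x = x) : x = 0 := by
  have hR_inj : Function.Injective R := he.injective_of_mul_self hR hT hTR
  obtain ⟨v, rfl, hDv⟩ := exists_sub_eq_rankOne_of_comp_eq hR
    (denseRange_of_isSelfAdjoint_of_injective hR hR_inj) hT hTR hQ
  suffices R x = 0 from (injective_iff_map_eq_zero R).1 hR_inj x this
  refine isCyclicVector_iff_forall_inner_eq_zero.1 he _ fun n => ?_
  have hcomm : R * ((R * R) ^ n * R) = (R * R) ^ (n + 1) := by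
    rw [← mul_assoc, ((Commute.refl R).mul_right (Commute.refl R)).pow_right n |>.eq, mul_assoc,
      pow_succ]
  have hRR : IsSelfAdjoint (R * R) := .of_nonneg hR.mul_self_nonneg
  calc ⟪((R * R) ^ n) (R v), R x⟫_ℂ = ⟪v, (R * ((R * R) ^ n * R)) x⟫_ℂ := by
        rw [inner_apply_left_eq_inner_apply_right (hRR.pow n),
          inner_apply_left_eq_inner_apply_right hR]
        rfl
    _ = ⟪v, ((R * R) ^ (n + 1)) x⟫_ℂ := by rw [hcomm]
    _ = 0 := inner_pow_apply_eq_zero_of_sub_eq_rankOne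
      (ContinuousLinearMap.isPositive_adjoint_comp_self Q).isSelfAdjoint hDv hx (n + 1)

theorem symmetrization_asymptotically_stable_general (hR : IsSelfAdjoint R) (hRA : R * R = A)
    (hT : IsSelfAdjoint T) (hTB : T * T = B) (he : IsCyclicVector A e)
    (hBA : B * B = A * A - rankOne ℂ e e) :
    (∃! Q : H →L[ℂ] H, Q ∘L R = T) ∧
    ∀ Q : H →L[ℂ] H, Q ∘L R = T →
      ‖Q‖ ≤ 1 ∧
      (∀ x : H, (adjoint Q ∘L Q) x = x → x = 0) ∧
      (∀ x : H, Tendsto (fun n : ℕ => ((adjoint Q ∘L Q) ^ n) x) atTop (𝓝 0)) := by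
  subst hRA hTB
  have hR_dense : DenseRange R :=
    denseRange_of_isSelfAdjoint_of_injective hR (he.injective_of_mul_self hR hT hBA)
  have hle : T * T * (T * T) ≤ R * R * (R * R) := by
    rw [hBA, sub_le_self_iff, ContinuousLinearMap.nonneg_iff_isPositive]
    exact InnerProductSpace.isPositive_rankOne_self e
  have hnorm (x : H) : ‖T x‖ ≤ 1 * ‖R x‖ := by
    rw [one_mul]
    exact norm_apply_le_of_mul_self_mul_self_le hR hT hle x
  refine ⟨existsUnique_comp_eq_of_norm_le hR_dense hnorm, fun Q hQ => ?_⟩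
  have hQ_norm : ‖Q‖ ≤ 1 := opNorm_le_of_comp_eq_of_norm_le hR_dense zero_le_one hnorm hQ
  have hfix (x : H) (hx : (adjoint Q ∘L Q) x = x) : x = 0 :=
    he.eq_zero_of_adjoint_comp_self_apply_eq_self hR hT hBA hQ hx
  exact ⟨hQ_norm, hfix, tendsto_pow_apply_zero_of_forall_fixed_eq_zero (star_mul_self_nonneg Q)
    (adjoint_comp_self_le_one hQ_norm) hfix⟩

end Symmetrization

/-- **The symmetrized operator `𝔖₀ = Q*Q` is asymptotically stable.** In the model
`L²(ρ)` (with `ρ` a finite measure of bounded support on `(0,∞)` satisfying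
`∫ s⁻² dρ ≤ 1`, `M` multiplication by `s`, and `M̃ = (M² − ⟨·,𝟙⟩𝟙)^{1/2}`), there is a
unique bounded operator `Q` with `Q∘M^{1/2} = M̃^{1/2}`; it is a contraction, the positive
self-adjoint contraction `𝔖₀ = Q*Q` does not have `1` as an eigenvalue, and `𝔖₀` is
asymptotically stable. -/
theorem symmetrization_asymptotically_stable
    (ρ : Measure ℝ) [IsFiniteMeasure ρ]
    (hcarr : ρ {s : ℝ | s ≤ 0} = 0)
    (hbddsupp : ∃ b : ℝ, ρ {s : ℝ | b < s} = 0)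
    (hnorm : ∫⁻ s, ENNReal.ofReal (s⁻¹ ^ 2) ∂ρ ≤ 1)
    (one : Lp ℂ 2 ρ)
    (hone : ∀ᵐ s ∂ρ, (one : ℝ → ℂ) s = 1)
    (M Mt Ms Mts : Lp ℂ 2 ρ →L[ℂ] Lp ℂ 2 ρ)
    (hM : ∀ f : Lp ℂ 2 ρ, ∀ᵐ s ∂ρ, (M f : ℝ → ℂ) s = (s : ℂ) * (f : ℝ → ℂ) s)
    (hMt_pos : Mt.IsPositive)
    (hMt_sq : ∀ f, Mt (Mt f) = M (M f) - ⟪one, f⟫_ℂ • one)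
    (hMs_pos : Ms.IsPositive) (hMs_sq : ∀ f, Ms (Ms f) = M f)
    (hMts_pos : Mts.IsPositive) (hMts_sq : ∀ f, Mts (Mts f) = Mt f) :
    (∃! Q : Lp ℂ 2 ρ →L[ℂ] Lp ℂ 2 ρ, Q.comp Ms = Mts) ∧
    ∀ Q : Lp ℂ 2 ρ →L[ℂ] Lp ℂ 2 ρ, Q.comp Ms = Mts →
      ‖Q‖ ≤ 1 ∧
      (∀ x : Lp ℂ 2 ρ, ((ContinuousLinearMap.adjoint Q).comp Q) x = x → x = 0) ∧
      (∀ x : Lp ℂ 2 ρ,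
        Tendsto (fun n : ℕ => (((ContinuousLinearMap.adjoint Q).comp Q) ^ n) x)
          atTop (nhds 0)) := by
  obtain ⟨b, hb⟩ := hbddsupp
  have hsupp : ∀ᵐ s ∂ρ, s ∈ Set.Icc 0 b := by
    filter_upwards [measure_eq_zero_iff_ae_notMem.1 hcarr, measure_eq_zero_iff_ae_notMem.1 hb]
      with s h_pos h_le using ⟨(not_le.1 h_pos).le, not_lt.1 h_le⟩
  exact symmetrization_asymptotically_stable_general
    hMs_pos.isSelfAdjoint (ContinuousLinearMap.ext hMs_sq)
    hMts_pos.isSelfAdjoint (ContinuousLinearMap.ext hMts_sq)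
    (isCyclicVector_one_of_ae_mem_Icc hsupp hone hM) (ContinuousLinearMap.ext hMt_sq)
end
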